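/- Let N ≥ 2 and 0 < R₀ < R₁. Suppose Λ₁ : ℝ → ℝ is a function such that for every s ∈ [0, R₁ − R₀), λ₁(p, Ω_s) → Λ₁(s) as p → 1⁺. Then Λ₁ is continuous on [0, R₁ − R₀), Λ₁ is decreasing on [0, R₁ − R₀) (i.e. Λ₁(s₂) ≤ Λ₁(s₁) whenever 0 ≤ s₁ ≤ s₂ < R₁ − R₀), and there exists s* ∈ [0, R₁ − R₀) such that Λ₁(0) = Λ₁(s*) and Λ₁(s*) > Λ₁(s) for all s ∈ (s*, R₁ − R₀). -/

import Mathlib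

open MeasureTheory Metric Set Filter
open scoped RealInnerProductSpace ENNReal Topology

/-- The first Dirichlet eigenvalue of the p-Laplacian on `Ω`, defined variationally as the
infimum of Rayleigh quotients of smooth, not identically zero functions with compact
support contained in `Ω`. -/
noncomputable def lam1 {N : ℕ} (p : ℝ) (Ω : Set (EuclideanSpace ℝ (Fin N))) : ℝ :=
  sInf { r : ℝ | ∃ u : EuclideanSpace ℝ (Fin N) → ℝ,
    ContDiff ℝ (⊤ : ℕ∞) u ∧ u ≠ 0 ∧ HasCompactSupport u ∧ tsupport u ⊆ Ω ∧
    r = (∫ x in Ω, ‖gradient u x‖ ^ p) / (∫ x in Ω, |u x| ^ p) }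

/-- The first standard basis vector `e₁` of `ℝ^N`. -/
noncomputable def e1 (N : ℕ) : EuclideanSpace ℝ (Fin N) :=
  (WithLp.equiv 2 (Fin N → ℝ)).symm (fun i => if (i : ℕ) = 0 then 1 else 0)

/-- The eccentric annulus `Ω_s = B_{R₁}(0) \ closure (B_{R₀}(s e₁))`. -/
noncomputable def Om (N : ℕ) (R₀ R₁ s : ℝ) : Set (EuclideanSpace ℝ (Fin N)) :=
  ball 0 R₁ \ closure (ball (s • e1 N) R₀)

/-- `u` is a first eigenfunction of the p-Laplacian on `Ω` with eigenvalue `lam`: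
C¹ on an open set containing the closure of `Ω`, positive in `Ω`, zero on `∂Ω`, and a weak
solution of `−Δ_p u = lam · u^{p−1}`. -/
def IsFirstEigenfunction {N : ℕ} (p : ℝ) (Ω : Set (EuclideanSpace ℝ (Fin N)))
    (lam : ℝ) (u : EuclideanSpace ℝ (Fin N) → ℝ) : Prop :=
  (∃ V : Set (EuclideanSpace ℝ (Fin N)), IsOpen V ∧ closure Ω ⊆ V ∧ ContDiffOn ℝ 1 u V) ∧
  (∀ x ∈ Ω, 0 < u x) ∧
  (∀ x ∈ frontier Ω, u x = 0) ∧
  (∀ φ : EuclideanSpace ℝ (Fin N) → ℝ, ContDiff ℝ (⊤ : ℕ∞) φ → HasCompactSupport φ →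
    tsupport φ ⊆ Ω →
    ∫ x in Ω, ‖gradient u x‖ ^ (p - 2) * ⟪gradient u x, gradient φ x⟫ =
      lam * ∫ x in Ω, (u x) ^ (p - 1) * φ x)

/-!
Fix `s ≤ t` and let `H` be the hyperplane equidistant from the centres `s e₁` and `t e₁`.
Polarization across `H` moves the larger of two mirror values to the side of `0`; it keeps
`∫ |u| ^ p` and `∫ ‖∇u‖ ^ p` and turns a test function on `Ω_s` into a (Lipschitz) one on `Ω_t`.
Mollification makes Lipschitz test functions admissible, so `λ₁(p, Ω_t) ≤ λ₁(p, Ω_s)`.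
Continuity of the limit holds because `Ω_t` is the image of `Ω_s` under a bi-Lipschitz map that is
close to the identity, with constants that do not depend on `p ∈ (1, 2]`.

For strictness, compare with the ratio `h` of perimeter to volume of the concentric annulus. A
vector field with norm at most `1` and constant divergence `h` on the annulus gives `Λ(0) ≥ h`. When
`s` is close to `R₁ - R₀`, the two spheres nearly touch, and cutting the thin cusp off `Ω_s` by a
hyperplane saves more perimeter than the factor `h` times the volume lost, so `Λ(s) < h`. By
monotonicity and continuity, `s*` is then the last point at which `Λ` equals `Λ(0)`.
-/

section PowerIntegrals

lemma mul_rpow_sub_one_mul_le {a b p : ℝ} (ha : 0 ≤ a) (hb : 0 ≤ b) (hp : 1 < p) :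
    p * (a ^ (p - 1) * b) ≤ (p - 1) * a ^ p + b ^ p := by
  have hp₁ : p - 1 ≠ 0 := by linarith
  have young := Real.young_inequality_of_nonneg (Real.rpow_nonneg ha (p - 1)) hb
    (Real.HolderConjugate.conjExponent hp).symm
  rw [← Real.rpow_mul ha, Real.conjExponent, mul_div_cancel₀ _ hp₁] at young
  calc p * (a ^ (p - 1) * b) ≤ p * (a ^ p / (p / (p - 1)) + b ^ p / p) := by gcongr
    _ = (p - 1) * a ^ p + b ^ p := by field_simp

lemma rpow_integral_mul_le {X : Type*} [MeasurableSpace X] {μ : Measure X} {ρ g : X → ℝ} {p : ℝ}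
    (hp : 1 ≤ p) (hρ : Measurable ρ) (hρ₀ : ∀ x, 0 ≤ ρ x) (hρ₁ : ∫ x, ρ x ∂μ = 1)
    (hg : ∀ x, 0 ≤ g x) (hi : Integrable (fun x => ρ x * g x) μ)
    (hip : Integrable (fun x => ρ x * g x ^ p) μ) :
    (∫ x, ρ x * g x ∂μ) ^ p ≤ ∫ x, ρ x * g x ^ p ∂μ := by
  let d : X → ENNReal := fun x => ENNReal.ofReal (ρ x)
  have hd : Measurable d := hρ.ennreal_ofReal
  have hd_top : ∀ᵐ x ∂μ, d x < ∞ := .of_forall fun _ => ENNReal.ofReal_lt_top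
  have toReal_smul (f : X → ℝ) (x : X) : (d x).toReal • f x = ρ x * f x := by
    simp only [d, ENNReal.toReal_ofReal (hρ₀ x), smul_eq_mul]
  have hρi : Integrable ρ μ := by
    by_contra h
    simp [integral_undef h] at hρ₁
  have : IsProbabilityMeasure (μ.withDensity d) := ⟨by
    rw [withDensity_apply _ MeasurableSet.univ, Measure.restrict_univ,
      ← ofReal_integral_eq_lintegral_ofReal hρi (.of_forall hρ₀), hρ₁, ENNReal.ofReal_one]⟩
  have integrable_d {f : X → ℝ} (hf : Integrable (fun x => ρ x * f x) μ) :
      Integrable f (μ.withDensity d) := by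
    rw [integrable_withDensity_iff_integrable_smul' hd hd_top]
    simpa only [toReal_smul] using hf
  have jensen := (convexOn_rpow hp).map_integral_le (μ := μ.withDensity d)
    (continuousOn_id.rpow_const fun _ _ => Or.inr (by linarith)) isClosed_Ici
    (.of_forall hg) (integrable_d hi) (integrable_d hip)
  simpa only [integral_withDensity_eq_integral_toReal_smul hd hd_top, toReal_smul g,
    toReal_smul (fun x => g x ^ p)] using jensen

variable {X : Type*} [TopologicalSpace X] [MeasurableSpace X] [OpensMeasurableSpace X]
  {μ : Measure X} [IsFiniteMeasureOnCompacts μ]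

lemma integrable_abs_rpow {u : X → ℝ} {p : ℝ} (hp : 0 < p)
    (hu : Continuous u) (hc : HasCompactSupport u) : Integrable (fun x => |u x| ^ p) μ :=
  (hu.abs.rpow_const fun _ => Or.inr hp.le).integrable_of_hasCompactSupport
    (hc.comp_left (g := fun t => |t| ^ p) (by simp [hp.ne']))

lemma integral_abs_rpow_pos [μ.IsOpenPosMeasure] {u : X → ℝ} {p : ℝ}
    (hp : 0 < p) (hu : Continuous u) (hc : HasCompactSupport u) (hne : u ≠ 0) :
    0 < ∫ x, |u x| ^ p ∂μ := by
  obtain ⟨x, hx⟩ := Function.ne_iff.1 hne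
  exact (hu.abs.rpow_const fun _ => Or.inr hp.le).integral_pos_of_hasCompactSupport_nonneg_nonzero
    (hc.comp_left (g := fun t => |t| ^ p) (by simp [hp.ne'])) (fun _ => by positivity)
    (Real.rpow_pos_of_pos (abs_pos.2 hx) _).ne'

lemma tendsto_integral_abs_rpow_of_tendstoUniformly {ι : Type*}
    {l : Filter ι} [l.IsCountablyGenerated] {v : ι → X → ℝ} {u : X → ℝ} {K : Set X} {p : ℝ}
    (hp : 0 < p) (hK : IsCompact K) (hKm : MeasurableSet K) (hv : ∀ᶠ i in l, Continuous (v i))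
    (hvK : ∀ᶠ i in l, ∀ x ∉ K, v i x = 0) (hu : ContinuousOn u K)
    (hlim : TendstoUniformly v u l) :
    Tendsto (fun i => ∫ x, |v i x| ^ p ∂μ) l (𝓝 (∫ x, |u x| ^ p ∂μ)) := by
  obtain ⟨M, hM⟩ := hK.exists_bound_of_continuousOn hu
  refine tendsto_integral_filter_of_dominated_convergence (K.indicator fun _ => (M + 1) ^ p)
    ?_ ?_ ?_ ?_
  · filter_upwards [hv] with i hi
    exact (hi.abs.rpow_const fun _ => Or.inr hp.le).aestronglyMeasurable
  · filter_upwards [hvK, Metric.tendstoUniformly_iff.1 hlim 1 one_pos] with i hi hi₁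
    refine .of_forall fun x => ?_
    by_cases hx : x ∈ K
    · rw [indicator_of_mem hx, Real.norm_of_nonneg (by positivity)]
      have hux := hM x hx
      have hvx := hi₁ x
      rw [Real.norm_eq_abs] at hux
      rw [Real.dist_eq, abs_sub_comm] at hvx
      gcongr
      linarith [abs_sub_abs_le_abs_sub (v i x) (u x)]
    · simp [hx, hi x hx, hp.ne']
  · exact (integrable_indicator_iff hKm).2 (integrableOn_const hK.measure_lt_top.ne)
  · exact .of_forall fun x => ((hlim.tendsto_at x).abs).rpow_const (Or.inr hp.le)

end PowerIntegrals

section LipschitzTestFunctions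

open scoped Convolution

variable {E F : Type*} [NormedAddCommGroup E] [NormedSpace ℝ E] [NormedAddCommGroup F]
  [NormedSpace ℝ F] [MeasurableSpace E] [BorelSpace E] {μ : Measure E}

lemma integrable_norm_fderiv_rpow [IsFiniteMeasureOnCompacts μ] [CompleteSpace F] {u : E → F}
    {C : NNReal} {p : ℝ} (hp : 0 < p) (hu : LipschitzWith C u) (hc : HasCompactSupport u) :
    Integrable (fun x => ‖fderiv ℝ u x‖ ^ p) μ := by
  have hsupp : (tsupport u).indicator (fun x => ‖fderiv ℝ u x‖ ^ p) =
      fun x => ‖fderiv ℝ u x‖ ^ p := by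
    refine indicator_eq_self.2 fun x hx => ?_
    by_contra h
    simp [fderiv_of_notMem_tsupport ℝ h, hp.ne'] at hx
  rw [← hsupp, integrable_indicator_iff (isClosed_tsupport u).measurableSet]
  refine Measure.integrableOn_of_bounded (M := (C : ℝ) ^ p) hc.isCompact.measure_lt_top.ne
    ((measurable_fderiv ℝ u).norm.pow_const p).aestronglyMeasurable (.of_forall fun x => ?_)
  rw [Real.norm_of_nonneg (by positivity)]
  gcongr
  exact norm_fderiv_le_of_lipschitz ℝ hu

lemma integrable_norm_fderiv [IsFiniteMeasureOnCompacts μ] [CompleteSpace F] {u : E → F}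
    {C : NNReal} (hu : LipschitzWith C u) (hc : HasCompactSupport u) :
    Integrable (fun x => ‖fderiv ℝ u x‖) μ := by
  simpa only [Real.rpow_one] using integrable_norm_fderiv_rpow one_pos hu hc

variable [FiniteDimensional ℝ E] [μ.IsAddHaarMeasure] {u : E → ℝ} {ρ : E → ℝ} {C : NNReal}

lemma hasFDerivAt_convolution_of_lipschitzWith (hρ : Continuous ρ) (hρc : HasCompactSupport ρ)
    (hu : LipschitzWith C u) (x : E) :
    HasFDerivAt (ρ ⋆[.lsmul ℝ ℝ, μ] u) (∫ t, ρ t • fderiv ℝ u (x - t) ∂μ) x := by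
  have hcont (y : E) : Continuous fun t => ρ t • u (y - t) :=
    hρ.smul (hu.continuous.comp (continuous_const.sub continuous_id))
  have hmeas : Measurable fun t => fderiv ℝ u (x - t) :=
    (measurable_fderiv ℝ u).comp (measurable_const.sub measurable_id)
  refine (hasFDerivAt_integral_of_dominated_loc_of_lip (μ := μ)
    (F := fun y t => ρ t • u (y - t)) (s := univ) (bound := fun t => ‖ρ t‖ * C) univ_mem ?_ ?_ ?_
    ?_ ?_ ?_).2
  · exact .of_forall fun y => (hcont y).aestronglyMeasurable
  · exact (hcont x).integrable_of_hasCompactSupport hρc.smul_right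
  · exact (hρ.measurable.smul hmeas).aestronglyMeasurable
  · refine .of_forall fun t => (LipschitzWith.of_dist_le_mul fun y z => ?_).lipschitzOnWith
    have h := hu.dist_le_mul (y - t) (z - t)
    rw [dist_sub_right] at h
    rw [dist_smul₀, Real.coe_nnabs, abs_of_nonneg (by positivity), mul_assoc]
    gcongr
  · exact ((hρ.integrable_of_hasCompactSupport hρc).norm).mul_const _
  · filter_upwards [(Measure.measurePreserving_sub_left μ x).quasiMeasurePreserving.ae
      (hu.ae_differentiableAt (μ := μ))] with t ht
    exact (ht.hasFDerivAt.comp x ((hasFDerivAt_id x).sub_const t)).const_smul (ρ t)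

lemma norm_fderiv_convolution_le (hρ : Continuous ρ) (hρc : HasCompactSupport ρ)
    (hρ₀ : ∀ x, 0 ≤ ρ x) (hu : LipschitzWith C u) (x : E) :
    ‖fderiv ℝ (ρ ⋆[.lsmul ℝ ℝ, μ] u) x‖ ≤ ∫ t, ρ t * ‖fderiv ℝ u (x - t)‖ ∂μ := by
  rw [(hasFDerivAt_convolution_of_lipschitzWith hρ hρc hu x).fderiv]
  refine (norm_integral_le_integral_norm _).trans_eq (integral_congr_ae (.of_forall fun t => ?_))
  simp only [norm_smul, Real.norm_of_nonneg (hρ₀ t)]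

lemma integral_norm_fderiv_convolution_rpow_le {p : ℝ} (hp : 1 ≤ p) (hρ : Continuous ρ)
    (hρc : HasCompactSupport ρ) (hρ₀ : ∀ x, 0 ≤ ρ x) (hρ₁ : ∫ x, ρ x ∂μ = 1)
    (hu : LipschitzWith C u) (hc : HasCompactSupport u) :
    ∫ x, ‖fderiv ℝ (ρ ⋆[.lsmul ℝ ℝ, μ] u) x‖ ^ p ∂μ ≤ ∫ x, ‖fderiv ℝ u x‖ ^ p ∂μ := by
  have hp₀ : 0 < p := by linarith
  have hρi : Integrable ρ μ := hρ.integrable_of_hasCompactSupport hρc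
  have hgrad := integrable_norm_fderiv_rpow (μ := μ) hp₀ hu hc
  have hint (q : ℝ) (hq : 0 < q) (x : E) :
      Integrable (fun t => ρ t * ‖fderiv ℝ u (x - t)‖ ^ q) μ := by
    refine hρi.mul_bdd (c := (C : ℝ) ^ q) (((measurable_fderiv ℝ u).comp
      (measurable_const.sub measurable_id)).norm.pow_const q).aestronglyMeasurable
      (.of_forall fun t => ?_)
    rw [Real.norm_of_nonneg (by positivity)]
    gcongr
    exact norm_fderiv_le_of_lipschitz ℝ hu
  calc ∫ x, ‖fderiv ℝ (ρ ⋆[.lsmul ℝ ℝ, μ] u) x‖ ^ p ∂μ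
      ≤ ∫ x, (ρ ⋆[.lsmul ℝ ℝ, μ] fun y => ‖fderiv ℝ u y‖ ^ p) x ∂μ := by
        refine integral_mono_of_nonneg (.of_forall fun _ => by positivity)
          (hρi.integrable_convolution _ hgrad) (.of_forall fun x => ?_)
        simp only [convolution_lsmul, smul_eq_mul]
        calc ‖fderiv ℝ (ρ ⋆[.lsmul ℝ ℝ, μ] u) x‖ ^ p
            ≤ (∫ t, ρ t * ‖fderiv ℝ u (x - t)‖ ∂μ) ^ p := by
              gcongr
              exact norm_fderiv_convolution_le hρ hρc hρ₀ hu x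
          _ ≤ ∫ t, ρ t * ‖fderiv ℝ u (x - t)‖ ^ p ∂μ :=
              rpow_integral_mul_le hp hρ.measurable hρ₀ hρ₁ (fun _ => norm_nonneg _)
                (by simpa only [Real.rpow_one] using hint 1 one_pos x) (hint p hp₀ x)
    _ = ∫ x, ‖fderiv ℝ u x‖ ^ p ∂μ := by
        rw [integral_convolution _ hρi hgrad, hρ₁]
        simp

end LipschitzTestFunctions

section Mollification

open scoped Convolution

variable {E : Type*} [NormedAddCommGroup E] [NormedSpace ℝ E] [HasContDiffBump E]

lemma tsupport_normed_convolution_subset [MeasurableSpace E] [BorelSpace E]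
    [FiniteDimensional ℝ E] {μ : Measure E} [IsLocallyFiniteMeasure μ] [μ.IsOpenPosMeasure]
    (φ : ContDiffBump (0 : E)) (u : E → ℝ) :
    tsupport (φ.normed μ ⋆[.lsmul ℝ ℝ, μ] u) ⊆ cthickening φ.rOut (tsupport u) := by
  refine closure_minimal (fun x hx => ?_) isClosed_cthickening
  obtain ⟨a, ha, b, hb, rfl⟩ := Set.mem_add.1 (support_convolution_subset _ hx)
  rw [ContDiffBump.support_normed_eq, mem_ball_zero_iff] at ha
  refine mem_cthickening_of_dist_le _ b _ _ (subset_tsupport u hb) ?_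
  rw [dist_eq_norm, add_sub_cancel_right]
  exact ha.le

lemma exists_contDiffBump_tendsto_rOut (E : Type*) [NormedAddCommGroup E] :
    ∃ φ : ℕ → ContDiffBump (0 : E), Tendsto (fun n => (φ n).rOut) atTop (𝓝 0) :=
  ⟨fun n => ⟨1 / ((n : ℝ) + 1) / 2, 1 / ((n : ℝ) + 1), by positivity, half_lt_self (by positivity)⟩,
    tendsto_one_div_add_atTop_nhds_zero_nat⟩

lemma tendstoUniformly_normed_convolution [MeasurableSpace E] [BorelSpace E]
    [FiniteDimensional ℝ E] {μ : Measure E} [μ.IsAddHaarMeasure] {u : E → ℝ} {C : NNReal}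
    (hu : LipschitzWith C u) {ι : Type*} {l : Filter ι} {φ : ι → ContDiffBump (0 : E)}
    (hφ : Tendsto (fun i => (φ i).rOut) l (𝓝 0)) :
    TendstoUniformly (fun i => (φ i).normed μ ⋆[.lsmul ℝ ℝ, μ] u) u l := by
  refine Metric.tendstoUniformly_iff.2 fun ε hε => ?_
  have hsmall : ∀ᶠ i in l, C * (φ i).rOut < ε :=
    (hφ.const_mul (C : ℝ)).eventually (gt_mem_nhds (by simpa using hε))
  filter_upwards [hsmall] with i hi x
  rw [dist_comm]
  refine (ContDiffBump.dist_normed_convolution_le hu.continuous.aestronglyMeasurable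
    fun y hy => ?_).trans_lt hi
  exact (hu.dist_le_mul y x).trans (by gcongr; exact (mem_ball.1 hy).le)

end Mollification

section RayleighQuotient

lemma norm_gradient {E : Type*} [NormedAddCommGroup E] [InnerProductSpace ℝ E] [CompleteSpace E]
    (u : E → ℝ) (x : E) : ‖gradient u x‖ = ‖fderiv ℝ u x‖ := by
  simp [gradient]

variable {N : ℕ} {p : ℝ} {Ω : Set (EuclideanSpace ℝ (Fin N))} {u : EuclideanSpace ℝ (Fin N) → ℝ}

lemma setIntegral_norm_gradient_rpow (hp : p ≠ 0) (hu : tsupport u ⊆ Ω) :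
    ∫ x in Ω, ‖gradient u x‖ ^ p = ∫ x, ‖fderiv ℝ u x‖ ^ p := by
  simp_rw [norm_gradient]
  refine setIntegral_eq_integral_of_forall_compl_eq_zero fun x hx => ?_
  simp [fderiv_of_notMem_tsupport ℝ fun h => hx (hu h), hp]

lemma setIntegral_abs_rpow (hp : p ≠ 0) (hu : tsupport u ⊆ Ω) :
    ∫ x in Ω, |u x| ^ p = ∫ x, |u x| ^ p := by
  refine setIntegral_eq_integral_of_forall_compl_eq_zero fun x hx => ?_
  simp [image_eq_zero_of_notMem_tsupport fun h => hx (hu h), hp]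

lemma lam1_nonneg (p : ℝ) (Ω : Set (EuclideanSpace ℝ (Fin N))) : 0 ≤ lam1 p Ω := by
  refine Real.sInf_nonneg ?_
  rintro r ⟨u, -, -, -, -, rfl⟩
  positivity

lemma lam1_mul_integral_le_of_contDiff (hp : 0 < p) (hs : ContDiff ℝ (⊤ : ℕ∞) u)
    (hc : HasCompactSupport u) (hu : tsupport u ⊆ Ω) :
    lam1 p Ω * ∫ x, |u x| ^ p ≤ ∫ x, ‖fderiv ℝ u x‖ ^ p := by
  by_cases h0 : u = 0
  · simp [h0, hp.ne']
  rw [← le_div_iff₀ (integral_abs_rpow_pos hp hs.continuous hc h0),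
    ← setIntegral_norm_gradient_rpow hp.ne' hu, ← setIntegral_abs_rpow hp.ne' hu]
  refine csInf_le ⟨0, ?_⟩ ⟨u, hs, h0, hc, hu, rfl⟩
  rintro r ⟨v, -, -, -, -, rfl⟩
  positivity

lemma le_lam1 (hp : 0 < p) (hΩ : IsOpen Ω) (hne : Ω.Nonempty) {c : ℝ}
    (h : ∀ u : EuclideanSpace ℝ (Fin N) → ℝ, ContDiff ℝ (⊤ : ℕ∞) u → HasCompactSupport u →
      tsupport u ⊆ Ω → c * ∫ x, |u x| ^ p ≤ ∫ x, ‖fderiv ℝ u x‖ ^ p) : c ≤ lam1 p Ω := by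
  refine le_csInf ?_ ?_
  · obtain ⟨x, hx⟩ := hne
    obtain ⟨f, hfΩ, hfc, hfs, -, hfx⟩ := exists_contDiff_tsupport_subset (n := ⊤) (hΩ.mem_nhds hx)
    exact ⟨_, f, hfs, fun hf => by simp [hf] at hfx, hfc, hfΩ, rfl⟩
  · rintro r ⟨u, hs, h0, hc, hu, rfl⟩
    rw [setIntegral_norm_gradient_rpow hp.ne' hu, setIntegral_abs_rpow hp.ne' hu,
      le_div_iff₀ (integral_abs_rpow_pos hp hs.continuous hc h0)]
    exact h u hs hc hu

lemma lam1_mul_integral_le (hp : 1 ≤ p) (hΩ : IsOpen Ω) {C : NNReal} (hl : LipschitzWith C u)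
    (hc : HasCompactSupport u) (hu : tsupport u ⊆ Ω) :
    lam1 p Ω * ∫ x, |u x| ^ p ≤ ∫ x, ‖fderiv ℝ u x‖ ^ p := by
  have hp₀ : 0 < p := by linarith
  obtain ⟨δ, hδ, hδΩ⟩ := hc.isCompact.exists_cthickening_subset_open hΩ hu
  have hK : IsCompact (cthickening δ (tsupport u)) := hc.isCompact.cthickening
  obtain ⟨φ, hφ⟩ := exists_contDiffBump_tendsto_rOut (EuclideanSpace ℝ (Fin N))
  let v (n : ℕ) := convolution ((φ n).normed volume) u (.lsmul ℝ ℝ) volume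
  have hv (n : ℕ) : ContDiff ℝ (⊤ : ℕ∞) (v n) :=
    HasCompactSupport.contDiff_convolution_left _ (φ n).hasCompactSupport_normed
      (φ n).contDiff_normed hl.continuous.locallyIntegrable
  have hvK : ∀ᶠ n in atTop, tsupport (v n) ⊆ cthickening δ (tsupport u) := by
    filter_upwards [hφ.eventually (ge_mem_nhds hδ)] with n hn
    exact (tsupport_normed_convolution_subset (φ n) u).trans (cthickening_mono hn _)
  have hlim : Tendsto (fun n => ∫ x, |v n x| ^ p) atTop (𝓝 (∫ x, |u x| ^ p)) := by
    refine tendsto_integral_abs_rpow_of_tendstoUniformly hp₀ hK isClosed_cthickening.measurableSet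
      (.of_forall fun n => (hv n).continuous) ?_ hl.continuous.continuousOn
      (tendstoUniformly_normed_convolution hl hφ)
    exact hvK.mono fun n hn x hx => image_eq_zero_of_notMem_tsupport fun h => hx (hn h)
  refine le_of_tendsto (hlim.const_mul _) ?_
  filter_upwards [hvK] with n hn
  calc lam1 p Ω * ∫ x, |v n x| ^ p ≤ ∫ x, ‖fderiv ℝ (v n) x‖ ^ p :=
        lam1_mul_integral_le_of_contDiff hp₀ (hv n)
          (hK.of_isClosed_subset (isClosed_tsupport _) hn) (hn.trans hδΩ)
    _ ≤ ∫ x, ‖fderiv ℝ u x‖ ^ p :=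
        integral_norm_fderiv_convolution_rpow_le hp (φ n).continuous_normed
          (φ n).hasCompactSupport_normed (φ n).nonneg_normed (φ n).integral_normed hl hc

end RayleighQuotient

section HyperplaneReflection

variable {E : Type*} [NormedAddCommGroup E] [InnerProductSpace ℝ E] {e : E}

/-- The reflection of `E` across the affine hyperplane `{x | ⟪e, x⟫ = a}`, for a unit vector `e`. -/
noncomputable def hyperplaneReflection (e : E) (a : ℝ) : E ≃ᵢ E :=
  (ℝ ∙ e)ᗮ.reflection.toIsometryEquiv.trans (IsometryEquiv.addRight ((2 * a) • e))

lemma hyperplaneReflection_apply (he : ‖e‖ = 1) (a : ℝ) (x : E) :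
    hyperplaneReflection e a x = x + (2 * (a - ⟪e, x⟫)) • e := by
  simp only [hyperplaneReflection, IsometryEquiv.trans_apply,
    LinearIsometryEquiv.coe_toIsometryEquiv, IsometryEquiv.addRight_apply,
    Submodule.reflection_orthogonal_apply, Submodule.reflection_singleton_apply, he,
    RCLike.ofReal_one, one_pow, div_one]
  module

lemma inner_hyperplaneReflection (he : ‖e‖ = 1) (a : ℝ) (x : E) :
    ⟪e, hyperplaneReflection e a x⟫ = 2 * a - ⟪e, x⟫ := by
  rw [hyperplaneReflection_apply he, inner_add_right, inner_smul_right,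
    real_inner_self_eq_norm_sq, he]
  ring

lemma hyperplaneReflection_hyperplaneReflection (he : ‖e‖ = 1) (a : ℝ) (x : E) :
    hyperplaneReflection e a (hyperplaneReflection e a x) = x := by
  rw [hyperplaneReflection_apply he, inner_hyperplaneReflection he, hyperplaneReflection_apply he]
  module

lemma hyperplaneReflection_smul_self (he : ‖e‖ = 1) (a s : ℝ) :
    hyperplaneReflection e a (s • e) = (2 * a - s) • e := by
  rw [hyperplaneReflection_apply he, inner_smul_right, real_inner_self_eq_norm_sq, he]
  module

lemma dist_hyperplaneReflection_sq (he : ‖e‖ = 1) (a : ℝ) (x y : E) :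
    dist (hyperplaneReflection e a x) y ^ 2 =
      dist x y ^ 2 + 4 * ((a - ⟪e, x⟫) * (a - ⟪e, y⟫)) := by
  rw [hyperplaneReflection_apply he, dist_eq_norm, dist_eq_norm, add_sub_right_comm,
    norm_add_sq_real, norm_smul, inner_smul_right, he, real_inner_comm e (x - y), inner_sub_right,
    mul_one, Real.norm_eq_abs, sq_abs]
  ring

lemma dist_le_dist_hyperplaneReflection (he : ‖e‖ = 1) {a : ℝ} {x y : E}
    (h : 0 ≤ (a - ⟪e, x⟫) * (a - ⟪e, y⟫)) : dist x y ≤ dist (hyperplaneReflection e a x) y :=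
  le_of_sq_le_sq (by linarith [dist_hyperplaneReflection_sq he a x y]) dist_nonneg

lemma dist_hyperplaneReflection_le (he : ‖e‖ = 1) {a : ℝ} {x y : E}
    (h : (a - ⟪e, x⟫) * (a - ⟪e, y⟫) ≤ 0) : dist (hyperplaneReflection e a x) y ≤ dist x y :=
  le_of_sq_le_sq (by linarith [dist_hyperplaneReflection_sq he a x y]) dist_nonneg

lemma hasFDerivAt_comp_hyperplaneReflection {f : E → ℝ} {a : ℝ} {x : E}
    (hf : DifferentiableAt ℝ f (hyperplaneReflection e a x)) :
    HasFDerivAt (fun y => f (hyperplaneReflection e a y))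
      ((fderiv ℝ f (hyperplaneReflection e a x)).comp
        ((ℝ ∙ e)ᗮ.reflection.toContinuousLinearEquiv : E →L[ℝ] E)) x :=
  hf.hasFDerivAt.comp x
    (((ℝ ∙ e)ᗮ.reflection.toContinuousLinearEquiv.hasFDerivAt).add_const _)

lemma norm_fderiv_comp_hyperplaneReflection {f : E → ℝ} {a : ℝ} {x : E}
    (hf : DifferentiableAt ℝ f (hyperplaneReflection e a x)) :
    ‖fderiv ℝ (fun y => f (hyperplaneReflection e a y)) x‖ =
      ‖fderiv ℝ f (hyperplaneReflection e a x)‖ := by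
  rw [(hasFDerivAt_comp_hyperplaneReflection hf).fderiv]
  exact ContinuousLinearMap.opNorm_comp_linearIsometryEquiv _ _

variable [FiniteDimensional ℝ E] [MeasurableSpace E] [BorelSpace E]

lemma measurePreserving_hyperplaneReflection (e : E) (a : ℝ) :
    MeasurePreserving (hyperplaneReflection e a) :=
  (measurePreserving_add_right volume _).comp (LinearIsometryEquiv.measurePreserving _)

lemma ae_inner_ne (μ : Measure E) [μ.IsAddHaarMeasure] (he : ‖e‖ = 1) (a : ℝ) :
    ∀ᵐ x ∂μ, ⟪e, x⟫ ≠ a := by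
  have hmem (x : E) : x ∈ AffineSubspace.mk' (a • e) (ℝ ∙ e)ᗮ ↔ ⟪e, x⟫ = a := by
    rw [AffineSubspace.mem_mk', vsub_eq_sub, Submodule.mem_orthogonal_singleton_iff_inner_right,
      inner_sub_right, inner_smul_right, real_inner_self_eq_norm_sq, he, one_pow, mul_one,
      sub_eq_zero]
  have hne : AffineSubspace.mk' (a • e) (ℝ ∙ e)ᗮ ≠ ⊤ := fun h => by
    have hx := (hmem ((a + 1) • e)).1 (h ▸ AffineSubspace.mem_top ℝ E _)
    rw [inner_smul_right, real_inner_self_eq_norm_sq, he] at hx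
    linarith
  exact ae_iff.2 (measure_mono_null (fun x hx => (hmem x).2 (not_not.1 hx))
    (Measure.addHaar_affineSubspace μ _ hne))

lemma integral_eq_of_add_hyperplaneReflection_eq (he : ‖e‖ = 1) {a : ℝ} {F G : E → ℝ}
    (hF : Integrable F) (hG : Integrable G)
    (h : ∀ᵐ x, ⟪e, x⟫ < a → F x + F (hyperplaneReflection e a x) =
      G x + G (hyperplaneReflection e a x)) : ∫ x, F x = ∫ x, G x := by
  have hmp := measurePreserving_hyperplaneReflection e a
  have hsum : ∀ᵐ x, F x + F (hyperplaneReflection e a x) =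
      G x + G (hyperplaneReflection e a x) := by
    filter_upwards [ae_inner_ne volume he a, h, hmp.quasiMeasurePreserving.ae h] with x hx h₁ h₂
    rcases hx.lt_or_gt with hlt | hgt
    · exact h₁ hlt
    · rw [inner_hyperplaneReflection he, hyperplaneReflection_hyperplaneReflection he] at h₂
      linarith [h₂ (by linarith)]
  have hcomp (H : E → ℝ) : ∫ x, H (hyperplaneReflection e a x) = ∫ x, H x :=
    hmp.integral_comp (hyperplaneReflection e a).toHomeomorph.measurableEmbedding H
  have hcompi {H : E → ℝ} (hH : Integrable H) :
      Integrable fun x => H (hyperplaneReflection e a x) := hmp.integrable_comp_of_integrable hH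
  have hint := integral_congr_ae hsum
  rw [integral_add hF (hcompi hF), integral_add hG (hcompi hG), hcomp, hcomp] at hint
  linarith

end HyperplaneReflection

section LatticeDerivatives

variable {E : Type*} [NormedAddCommGroup E] [NormedSpace ℝ E] {f g : E → ℝ} {x : E}

lemma fderiv_eq_of_le_of_eq (h : ∀ y, f y ≤ g y) (hx : f x = g x)
    (hf : DifferentiableAt ℝ f x) (hg : DifferentiableAt ℝ g x) :
    fderiv ℝ f x = fderiv ℝ g x := by
  have hmin : IsLocalMin (g - f) x := .of_forall fun y => by simp [hx, h y]
  have h₀ := hmin.fderiv_eq_zero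
  rw [fderiv_sub hg hf] at h₀
  exact (sub_eq_zero.1 h₀).symm

lemma fderiv_max_min (hf : DifferentiableAt ℝ f x) (hg : DifferentiableAt ℝ g x)
    (hmax : DifferentiableAt ℝ (fun y => max (f y) (g y)) x)
    (hmin : DifferentiableAt ℝ (fun y => min (f y) (g y)) x) :
    (fderiv ℝ (fun y => max (f y) (g y)) x = fderiv ℝ f x ∧
      fderiv ℝ (fun y => min (f y) (g y)) x = fderiv ℝ g x) ∨
    (fderiv ℝ (fun y => max (f y) (g y)) x = fderiv ℝ g x ∧
      fderiv ℝ (fun y => min (f y) (g y)) x = fderiv ℝ f x) := by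
  rcases le_total (f x) (g x) with h | h
  · exact .inr ⟨(fderiv_eq_of_le_of_eq (fun _ => le_max_right _ _) (max_eq_right h).symm
      hg hmax).symm, fderiv_eq_of_le_of_eq (fun _ => min_le_left _ _) (min_eq_left h) hmin hf⟩
  · exact .inl ⟨(fderiv_eq_of_le_of_eq (fun _ => le_max_left _ _) (max_eq_left h).symm
      hf hmax).symm, fderiv_eq_of_le_of_eq (fun _ => min_le_right _ _) (min_eq_right h) hmin hg⟩

lemma norm_fderiv_abs (hf : DifferentiableAt ℝ f x) (habs : DifferentiableAt ℝ (fun y => |f y|) x) :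
    ‖fderiv ℝ (fun y => |f y|) x‖ = ‖fderiv ℝ f x‖ := by
  have hmin : (fun y => min (f y) (-f y)) = fun y => -|f y| := by
    ext y
    rw [abs, ← min_neg_neg, neg_neg, min_comm]
  rcases fderiv_max_min hf hf.fun_neg habs (hmin ▸ habs.fun_neg) with ⟨h, -⟩ | ⟨h, -⟩
  · exact congrArg norm h
  · exact (congrArg norm h).trans (by rw [fderiv_fun_neg, norm_neg])

lemma integral_norm_fderiv_abs_rpow [FiniteDimensional ℝ E] [MeasurableSpace E] [BorelSpace E]
    {μ : Measure E} [μ.IsAddHaarMeasure] {C : NNReal} (hf : LipschitzWith C f) (p : ℝ) :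
    ∫ x, ‖fderiv ℝ (fun y => |f y|) x‖ ^ p ∂μ = ∫ x, ‖fderiv ℝ f x‖ ^ p ∂μ := by
  refine integral_congr_ae ?_
  filter_upwards [hf.ae_differentiableAt,
    (lipschitzWith_one_norm.comp hf).ae_differentiableAt] with x hfx hax
  rw [norm_fderiv_abs hfx hax]

end LatticeDerivatives

section Polarization

variable {E : Type*} [NormedAddCommGroup E] [InnerProductSpace ℝ E] {e : E} {a : ℝ} {w : E → ℝ}

/-- The polarization (two-point rearrangement) of `w` across the hyperplane `{x | ⟪e, x⟫ = a}`: of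
the values at two mirror points, the larger one goes to the side `⟪e, x⟫ ≤ a`. -/
noncomputable def polarization (e : E) (a : ℝ) (w : E → ℝ) (x : E) : ℝ :=
  if ⟪e, x⟫ ≤ a then max (w x) (w (hyperplaneReflection e a x))
  else min (w x) (w (hyperplaneReflection e a x))

lemma polarization_of_le (w : E → ℝ) {x : E} (hx : ⟪e, x⟫ ≤ a) :
    polarization e a w x = max (w x) (w (hyperplaneReflection e a x)) := if_pos hx

lemma polarization_of_lt (w : E → ℝ) {x : E} (hx : a < ⟪e, x⟫) :
    polarization e a w x = min (w x) (w (hyperplaneReflection e a x)) := if_neg hx.not_ge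

lemma polarization_hyperplaneReflection (he : ‖e‖ = 1) (w : E → ℝ) {x : E} (hx : ⟪e, x⟫ < a) :
    polarization e a w (hyperplaneReflection e a x) =
      min (w x) (w (hyperplaneReflection e a x)) := by
  rw [polarization_of_lt w (by rw [inner_hyperplaneReflection he]; linarith),
    hyperplaneReflection_hyperplaneReflection he, min_comm]

lemma dist_polarization_le_of_le_of_lt (he : ‖e‖ = 1) {C : NNReal} (hw : LipschitzWith C w)
    {x y : E} (hx : ⟪e, x⟫ ≤ a) (hy : a < ⟪e, y⟫) :
    dist (polarization e a w x) (polarization e a w y) ≤ C * dist x y := by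
  have hσy : dist x (hyperplaneReflection e a y) ≤ dist x y := by
    simpa only [dist_comm] using dist_hyperplaneReflection_le he (x := y) (y := x) (a := a)
      (mul_nonpos_of_nonpos_of_nonneg (by linarith) (by linarith))
  have hσx : dist (hyperplaneReflection e a x) y ≤ dist x y :=
    dist_hyperplaneReflection_le he
      (mul_nonpos_of_nonneg_of_nonpos (by linarith) (by linarith))
  rw [polarization_of_le w hx, polarization_of_lt w hy]
  rcases max_choice (w x) (w (hyperplaneReflection e a x)) with h | h <;>
    rcases min_choice (w y) (w (hyperplaneReflection e a y)) with h' | h' <;>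
    rw [h, h'] <;> refine (hw.dist_le_mul _ _).trans ?_ <;> gcongr
  exact ((hyperplaneReflection e a).dist_eq x y).le

lemma lipschitzWith_polarization (he : ‖e‖ = 1) {C : NNReal} (hw : LipschitzWith C w) :
    LipschitzWith C (polarization e a w) := by
  have hwσ : LipschitzWith C fun x => w (hyperplaneReflection e a x) :=
    (hw.comp (hyperplaneReflection e a).isometry.lipschitz).weaken (mul_one C).le
  refine LipschitzWith.of_dist_le_mul fun x y => ?_
  rcases le_or_gt ⟪e, x⟫ a with hx | hx <;> rcases le_or_gt ⟪e, y⟫ a with hy | hy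
  · rw [polarization_of_le w hx, polarization_of_le w hy]
    simpa using (hw.max hwσ).dist_le_mul x y
  · exact dist_polarization_le_of_le_of_lt he hw hx hy
  · rw [dist_comm, dist_comm x]
    exact dist_polarization_le_of_le_of_lt he hw hy hx
  · rw [polarization_of_lt w hx, polarization_of_lt w hy]
    simpa using (hw.min hwσ).dist_le_mul x y

lemma mem_tsupport_polarization (hw : ∀ x, 0 ≤ w x) {x : E}
    (hx : x ∈ tsupport (polarization e a w)) :
    (⟪e, x⟫ ≤ a ∧ (x ∈ tsupport w ∨ hyperplaneReflection e a x ∈ tsupport w)) ∨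
      (a ≤ ⟪e, x⟫ ∧ x ∈ tsupport w ∧ hyperplaneReflection e a x ∈ tsupport w) := by
  let T := {x | (⟪e, x⟫ ≤ a ∧ (x ∈ tsupport w ∨ hyperplaneReflection e a x ∈ tsupport w)) ∨
    (a ≤ ⟪e, x⟫ ∧ x ∈ tsupport w ∧ hyperplaneReflection e a x ∈ tsupport w)}
  have hT : IsClosed T := by
    have hinner : Continuous fun x : E => ⟪e, x⟫ := continuous_const.inner continuous_id
    have hS : IsClosed (tsupport w) := isClosed_tsupport w
    have hσS := hS.preimage (hyperplaneReflection e a).continuous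
    exact ((isClosed_le hinner continuous_const).inter (hS.union hσS)).union
      ((isClosed_le continuous_const hinner).inter (hS.inter hσS))
  refine closure_minimal (fun y hy => ?_) hT hx
  rcases le_or_gt ⟪e, y⟫ a with hya | hya
  · refine .inl ⟨hya, ?_⟩
    by_contra! h
    rw [Function.mem_support, polarization_of_le w hya, image_eq_zero_of_notMem_tsupport h.1,
      image_eq_zero_of_notMem_tsupport h.2, max_self] at hy
    exact hy rfl
  · rw [Function.mem_support, polarization_of_lt w hya] at hy
    refine .inr ⟨hya.le, ?_, ?_⟩ <;> by_contra h <;>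
      simp [image_eq_zero_of_notMem_tsupport h, hw] at hy

lemma hasCompactSupport_polarization (hw : ∀ x, 0 ≤ w x) (hc : HasCompactSupport w) :
    HasCompactSupport (polarization e a w) := by
  refine (hc.isCompact.union ((hyperplaneReflection e a).toHomeomorph.isCompact_preimage.2
    hc.isCompact)).of_isClosed_subset (isClosed_tsupport _) fun x hx => ?_
  rcases mem_tsupport_polarization hw hx with ⟨-, h⟩ | ⟨-, h, -⟩
  exacts [h, .inl h]

lemma rpow_norm_fderiv_polarization_add (he : ‖e‖ = 1) (p : ℝ) {x : E} (hx : ⟪e, x⟫ < a)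
    (hw : DifferentiableAt ℝ w x) (hwσ : DifferentiableAt ℝ w (hyperplaneReflection e a x))
    (hP : DifferentiableAt ℝ (polarization e a w) x)
    (hPσ : DifferentiableAt ℝ (polarization e a w) (hyperplaneReflection e a x)) :
    ‖fderiv ℝ (polarization e a w) x‖ ^ p +
        ‖fderiv ℝ (polarization e a w) (hyperplaneReflection e a x)‖ ^ p =
      ‖fderiv ℝ w x‖ ^ p + ‖fderiv ℝ w (hyperplaneReflection e a x)‖ ^ p := by
  have hnear : ∀ᶠ y in 𝓝 x, ⟪e, y⟫ < a :=
    (continuous_const.inner continuous_id).continuousAt.eventually_lt continuousAt_const hx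
  have hmax : polarization e a w =ᶠ[𝓝 x] fun y => max (w y) (w (hyperplaneReflection e a y)) :=
    hnear.mono fun y hy => polarization_of_le w hy.le
  have hmin : (fun y => polarization e a w (hyperplaneReflection e a y)) =ᶠ[𝓝 x]
      fun y => min (w y) (w (hyperplaneReflection e a y)) :=
    hnear.mono fun y hy => polarization_hyperplaneReflection he w hy
  rw [← norm_fderiv_comp_hyperplaneReflection hwσ, ← norm_fderiv_comp_hyperplaneReflection hPσ,
    hmax.fderiv_eq, hmin.fderiv_eq]
  rcases fderiv_max_min hw (hasFDerivAt_comp_hyperplaneReflection hwσ).differentiableAt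
    (hmax.differentiableAt_iff.1 hP)
    (hmin.differentiableAt_iff.1 (hasFDerivAt_comp_hyperplaneReflection hPσ).differentiableAt) with
    ⟨h, h'⟩ | ⟨h, h'⟩
  · rw [h, h']
  · rw [h, h', add_comm]

variable [FiniteDimensional ℝ E] [MeasurableSpace E] [BorelSpace E] {C : NNReal} {p : ℝ}

lemma integral_abs_polarization_rpow (he : ‖e‖ = 1) (hp : 0 < p) (hw : LipschitzWith C w)
    (hw₀ : ∀ x, 0 ≤ w x) (hc : HasCompactSupport w) :
    ∫ x, |polarization e a w x| ^ p = ∫ x, |w x| ^ p := by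
  refine integral_eq_of_add_hyperplaneReflection_eq (a := a) he
    (integrable_abs_rpow hp (lipschitzWith_polarization he hw).continuous
      (hasCompactSupport_polarization hw₀ hc))
    (integrable_abs_rpow hp hw.continuous hc) (.of_forall fun x hx => ?_)
  rw [polarization_of_le w hx.le, polarization_hyperplaneReflection he w hx]
  rcases le_total (w x) (w (hyperplaneReflection e a x)) with h | h
  · rw [max_eq_right h, min_eq_left h, add_comm]
  · rw [max_eq_left h, min_eq_right h]

lemma integral_norm_fderiv_polarization_rpow (he : ‖e‖ = 1) (hp : 0 < p) (hw : LipschitzWith C w)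
    (hw₀ : ∀ x, 0 ≤ w x) (hc : HasCompactSupport w) :
    ∫ x, ‖fderiv ℝ (polarization e a w) x‖ ^ p = ∫ x, ‖fderiv ℝ w x‖ ^ p := by
  have hP := lipschitzWith_polarization (a := a) he hw
  have hqmp := (measurePreserving_hyperplaneReflection e a).quasiMeasurePreserving
  have hwd := hw.ae_differentiableAt (μ := volume)
  have hPd := hP.ae_differentiableAt (μ := volume)
  refine integral_eq_of_add_hyperplaneReflection_eq (a := a) he
    (integrable_norm_fderiv_rpow hp hP (hasCompactSupport_polarization hw₀ hc))
    (integrable_norm_fderiv_rpow hp hw hc) ?_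
  filter_upwards [hwd, hqmp.ae hwd, hPd, hqmp.ae hPd] with x h₁ h₂ h₃ h₄ hx
  exact rpow_norm_fderiv_polarization_add he p hx h₁ h₂ h₃ h₄

end Polarization

section EccentricAnnulus

variable {N : ℕ} {R₀ R₁ s t : ℝ}

lemma norm_e1 [NeZero N] : ‖e1 N‖ = 1 := by
  have h : e1 N = EuclideanSpace.single 0 1 := by
    ext i
    simp [e1]
  simp [h]

lemma mem_Om (hR₀ : R₀ ≠ 0) {x : EuclideanSpace ℝ (Fin N)} :
    x ∈ Om N R₀ R₁ s ↔ ‖x‖ < R₁ ∧ R₀ < dist x (s • e1 N) := by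
  simp [Om, closure_ball _ hR₀]

lemma isOpen_Om (N : ℕ) (R₀ R₁ s : ℝ) : IsOpen (Om N R₀ R₁ s) :=
  isOpen_ball.sdiff isClosed_closure

lemma nonempty_Om [NeZero N] (hR₀ : 0 < R₀) (hR : R₀ < R₁) (s : ℝ) : (Om N R₀ R₁ s).Nonempty := by
  have hmem (c : ℝ) (hc : |c| < R₁) (hcs : R₀ < |c - s|) : c • e1 N ∈ Om N R₀ R₁ s := by
    simpa [mem_Om hR₀.ne', dist_eq_norm, ← sub_smul, norm_smul, norm_e1] using And.intro hc hcs
  rcases le_total 0 s with hs | hs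
  · refine ⟨_, hmem (-((R₀ + R₁) / 2)) ?_ ?_⟩
    · rw [abs_neg, abs_of_pos (by linarith)]; linarith
    · rw [abs_of_neg (by linarith)]; linarith
  · refine ⟨_, hmem ((R₀ + R₁) / 2) ?_ ?_⟩
    · rw [abs_of_pos (by linarith)]; linarith
    · rw [abs_of_pos (by linarith)]; linarith

lemma tsupport_polarization_subset_Om [NeZero N] (hR₀ : R₀ ≠ 0) (hs : 0 ≤ s) (hst : s ≤ t)
    {w : EuclideanSpace ℝ (Fin N) → ℝ} (hw₀ : ∀ x, 0 ≤ w x) (hw : tsupport w ⊆ Om N R₀ R₁ s) :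
    tsupport (polarization (e1 N) ((s + t) / 2) w) ⊆ Om N R₀ R₁ t := by
  have he : ‖e1 N‖ = 1 := norm_e1
  intro x hx
  have hcenter : dist (hyperplaneReflection (e1 N) ((s + t) / 2) x) (s • e1 N) =
      dist x (t • e1 N) := by
    rw [← (hyperplaneReflection (e1 N) ((s + t) / 2)).dist_eq x,
      hyperplaneReflection_smul_self he]
    ring_nf
  have hmem (y) (hy : y ∈ tsupport w) : ‖y‖ < R₁ ∧ R₀ < dist y (s • e1 N) :=
    (mem_Om hR₀).1 (hw hy)
  rw [mem_Om hR₀, ← hcenter]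
  rcases mem_tsupport_polarization hw₀ hx with ⟨hxa, h | h⟩ | ⟨-, h, h'⟩
  · refine ⟨(hmem x h).1, (hmem x h).2.trans_le (dist_le_dist_hyperplaneReflection he ?_)⟩
    rw [inner_smul_right, real_inner_self_eq_norm_sq, he]
    exact mul_nonneg (by linarith) (by linarith)
  · refine ⟨lt_of_le_of_lt ?_ (hmem _ h).1, (hmem _ h).2⟩
    simpa only [dist_zero_right] using dist_le_dist_hyperplaneReflection he (y := 0)
      (mul_nonneg (by linarith : 0 ≤ (s + t) / 2 - ⟪e1 N, x⟫) (by simp; linarith))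
  · exact ⟨(hmem x h).1, (hmem _ h').2⟩

lemma lam1_Om_le_of_le [NeZero N] {p : ℝ} (hR₀ : 0 < R₀) (hR : R₀ < R₁) (hp : 1 ≤ p)
    (hs : 0 ≤ s) (hst : s ≤ t) : lam1 p (Om N R₀ R₁ t) ≤ lam1 p (Om N R₀ R₁ s) := by
  have hp₀ : 0 < p := by linarith
  have he : ‖e1 N‖ = 1 := norm_e1
  refine le_lam1 hp₀ (isOpen_Om _ _ _ _) (nonempty_Om hR₀ hR s) fun u hu hc hsub => ?_
  obtain ⟨C, hC⟩ := (hu.of_le (by exact_mod_cast le_top) :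
    ContDiff ℝ 1 u).lipschitzWith_of_hasCompactSupport hc one_ne_zero
  let w : EuclideanSpace ℝ (Fin N) → ℝ := fun x => |u x|
  have hw₀ (x) : 0 ≤ w x := abs_nonneg _
  have hw : LipschitzWith C w :=
    (lipschitzWith_one_norm.comp hC).weaken (one_mul C).le
  have hwc : HasCompactSupport w := hc.comp_left (g := fun t : ℝ => |t|) abs_zero
  have hwsub : tsupport w ⊆ Om N R₀ R₁ s :=
    (closure_mono fun x hx => by simpa [w] using hx).trans hsub
  calc lam1 p (Om N R₀ R₁ t) * ∫ x, |u x| ^ p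
      = lam1 p (Om N R₀ R₁ t) * ∫ x, |polarization (e1 N) ((s + t) / 2) w x| ^ p := by
        rw [integral_abs_polarization_rpow he hp₀ hw hw₀ hwc]
        simp only [w, abs_abs]
    _ ≤ ∫ x, ‖fderiv ℝ (polarization (e1 N) ((s + t) / 2) w) x‖ ^ p :=
        lam1_mul_integral_le hp (isOpen_Om N R₀ R₁ t) (lipschitzWith_polarization he hw)
          (hasCompactSupport_polarization hw₀ hwc)
          (tsupport_polarization_subset_Om hR₀.ne' hs hst hw₀ hwsub)
    _ = ∫ x, ‖fderiv ℝ u x‖ ^ p := by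
        rw [integral_norm_fderiv_polarization_rpow he hp₀ hw hw₀ hwc,
          integral_norm_fderiv_abs_rpow hC]

end EccentricAnnulus

section DomainPerturbation

open ContinuousLinearMap (id)

variable {E : Type*} [NormedAddCommGroup E] [NormedSpace ℝ E]

lemma exists_homeomorph_add_of_lipschitzWith [CompleteSpace E] {g : E → E} {C : NNReal}
    (hg : LipschitzWith C g) (hC : C < 1) : ∃ Φ : E ≃ₜ E, ∀ x, Φ x = x + g x := by
  have happrox : ApproximatesLinearOn (fun x => x + g x)
      (ContinuousLinearEquiv.refl ℝ E : E →L[ℝ] E) univ C := fun x _ y _ => by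
    simpa [add_sub_add_comm] using hg.norm_sub_le x y
  refine ⟨happrox.toHomeomorph _ ?_, fun x => rfl⟩
  rcases subsingleton_or_nontrivial E with hE | hE
  · exact .inl hE
  · right
    have hnorm : ‖((ContinuousLinearEquiv.refl ℝ E).symm : E →L[ℝ] E)‖₊ = 1 :=
      ContinuousLinearMap.nnnorm_id
    rwa [hnorm, inv_one]

lemma integral_abs_det_fderiv_mul_comp [FiniteDimensional ℝ E] [MeasurableSpace E] [BorelSpace E]
    {μ : Measure E} [μ.IsAddHaarMeasure] {Φ : E ≃ₜ E} (hΦ : Differentiable ℝ Φ) (F : E → ℝ) :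
    ∫ x, |(fderiv ℝ Φ x).det| * F (Φ x) ∂μ = ∫ x, F x ∂μ := by
  have := integral_image_eq_integral_abs_det_fderiv_smul μ MeasurableSet.univ
    (fun x _ => (hΦ x).hasFDerivAt.hasFDerivWithinAt) Φ.injective.injOn F
  simpa only [image_univ, Φ.surjective.range_eq, setIntegral_univ, smul_eq_mul] using this.symm

lemma eventually_forall_det_id_add_smul [FiniteDimensional ℝ E] {ι : Type*} {A : ι → E →L[ℝ] E}
    {C ε : ℝ} (hA : ∀ i, ‖A i‖ ≤ C) (hε : 0 < ε) :
    ∀ᶠ δ : ℝ in 𝓝 0, ∀ i, |(id ℝ E + δ • A i).det - 1| ≤ ε ∧ ‖id ℝ E + δ • A i‖ ≤ 1 + ε := by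
  have hdet : ∀ᶠ B in 𝓝 (id ℝ E), |B.det - 1| ≤ ε ∧ ‖B‖ ≤ 1 + ε := by
    have hid : (id ℝ E).det = 1 := by simp [ContinuousLinearMap.det]
    have hcont := (ContinuousLinearMap.continuous_det (𝕜 := ℝ) (E := E)).tendsto (id ℝ E)
    rw [hid] at hcont
    have hnorm : ‖id ℝ E‖ < 1 + ε :=
      ContinuousLinearMap.norm_id_le.trans_lt (lt_add_of_pos_right 1 hε)
    filter_upwards [hcont (closedBall_mem_nhds 1 hε),
      continuous_norm.tendsto (id ℝ E) (Iic_mem_nhds hnorm)] with B hB hB'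
    exact ⟨hB, hB'⟩
  have hsmall : TendstoUniformly (fun (δ : ℝ) i => id ℝ E + δ • A i) (fun _ => id ℝ E) (𝓝 0) := by
    rw [Metric.tendstoUniformly_iff]
    intro r hr
    have hlim : Tendsto (fun δ : ℝ => |δ| * C) (𝓝 0) (𝓝 0) := by
      have : Continuous fun δ : ℝ => |δ| * C := by fun_prop
      simpa using this.tendsto 0
    filter_upwards [hlim.eventually (gt_mem_nhds hr)] with δ hδ i
    rw [dist_self_add_right, norm_smul, Real.norm_eq_abs]
    exact (mul_le_mul_of_nonneg_left (hA i) (abs_nonneg δ)).trans_lt hδ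
  obtain ⟨r, hr, hball⟩ := Metric.eventually_nhds_iff.1 hdet
  filter_upwards [Metric.tendstoUniformly_iff.1 hsmall r hr] with δ hδ i
  exact hball (dist_comm (id ℝ E) _ ▸ hδ i)

lemma integral_comp_mem_Icc [FiniteDimensional ℝ E] [MeasurableSpace E] [BorelSpace E]
    {μ : Measure E} [μ.IsAddHaarMeasure] {Φ : E ≃ₜ E} {α β : ℝ} (hΦ : ContDiff ℝ 1 Φ)
    (hdet : ∀ x, |(fderiv ℝ Φ x).det| ∈ Icc α β) {f : E → ℝ} (hf : Continuous f)
    (hfc : HasCompactSupport f) (hf₀ : ∀ x, 0 ≤ f x) :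
    ∫ x, f x ∂μ ∈ Icc (α * ∫ x, f (Φ x) ∂μ) (β * ∫ x, f (Φ x) ∂μ) := by
  have hcomp : Continuous fun x => f (Φ x) := hf.comp Φ.continuous
  have hcompc : HasCompactSupport fun x => f (Φ x) := hfc.comp_homeomorph Φ
  have hcomp_int : Integrable (fun x => f (Φ x)) μ := hcomp.integrable_of_hasCompactSupport hcompc
  have hdetc : Continuous fun x => |(fderiv ℝ Φ x).det| :=
    (ContinuousLinearMap.continuous_det.comp (hΦ.continuous_fderiv one_ne_zero)).abs
  have hdet_int : Integrable (fun x => |(fderiv ℝ Φ x).det| * f (Φ x)) μ :=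
    (hdetc.mul hcomp).integrable_of_hasCompactSupport hcompc.mul_left
  rw [← integral_abs_det_fderiv_mul_comp (hΦ.differentiable one_ne_zero) f, ← integral_const_mul,
    ← integral_const_mul]
  exact ⟨integral_mono (hcomp_int.const_mul α) hdet_int fun x =>
      mul_le_mul_of_nonneg_right (hdet x).1 (hf₀ _),
    integral_mono hdet_int (hcomp_int.const_mul β) fun x =>
      mul_le_mul_of_nonneg_right (hdet x).2 (hf₀ _)⟩

variable {N : ℕ}

lemma lam1_le_of_preimage_subset {Φ : EuclideanSpace ℝ (Fin N) ≃ₜ EuclideanSpace ℝ (Fin N)}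
    {Ω Ω' : Set (EuclideanSpace ℝ (Fin N))} {p α β L : ℝ} (hp : 0 < p)
    (hΦ : ContDiff ℝ (⊤ : ℕ∞) Φ) (hα : 0 ≤ α) (hβ : 0 < β) (hL : 0 < L)
    (hdet : ∀ x, |(fderiv ℝ Φ x).det| ∈ Icc α β) (hnorm : ∀ x, ‖fderiv ℝ Φ x‖ ≤ L)
    (hΩ' : IsOpen Ω') (hne : Ω'.Nonempty) (hsub : Φ ⁻¹' Ω' ⊆ Ω) :
    α * lam1 p Ω ≤ β * L ^ p * lam1 p Ω' := by
  rw [← div_le_iff₀' (by positivity)]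
  refine le_lam1 hp hΩ' hne fun u hs hc hu => ?_
  have hΦd : Differentiable ℝ Φ := hΦ.differentiable (by simp)
  have hvs : ContDiff ℝ (⊤ : ℕ∞) (u ∘ Φ) := hs.comp hΦ
  have hvc : HasCompactSupport (u ∘ Φ) := hc.comp_homeomorph Φ
  have hvΩ : tsupport (u ∘ Φ) ⊆ Ω :=
    (tsupport_comp_eq_preimage u Φ).trans_subset ((preimage_mono hu).trans hsub)
  have hDu : Continuous fun x => ‖fderiv ℝ u x‖ ^ p :=
    (hs.continuous_fderiv (by simp)).norm.rpow_const fun _ => .inr hp.le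
  have hDuc : HasCompactSupport fun x => ‖fderiv ℝ u x‖ ^ p :=
    (hc.fderiv ℝ).comp_left (g := fun A => ‖A‖ ^ p) (by simp [hp.ne'])
  have hΦ₁ : ContDiff ℝ 1 Φ := hΦ.of_le (by exact_mod_cast le_top)
  have hgrad : ∫ x, ‖fderiv ℝ (u ∘ Φ) x‖ ^ p ≤ L ^ p * ∫ x, ‖fderiv ℝ u (Φ x)‖ ^ p := by
    rw [← integral_const_mul]
    have hint : Integrable fun x => ‖fderiv ℝ u (Φ x)‖ ^ p :=
      (hDu.comp Φ.continuous).integrable_of_hasCompactSupport (hDuc.comp_homeomorph Φ)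
    refine integral_mono_of_nonneg (.of_forall fun x => by positivity) (hint.const_mul _)
      (.of_forall fun x => ?_)
    dsimp only
    rw [← Real.mul_rpow hL.le (norm_nonneg _),
      fderiv_comp x (hs.differentiable (by simp) _) (hΦd x), mul_comm]
    gcongr
    exact (ContinuousLinearMap.opNorm_comp_le _ _).trans (by gcongr; exact hnorm x)
  have hmass : ∫ x, |u x| ^ p ≤ β * ∫ x, |u (Φ x)| ^ p :=
    (integral_comp_mem_Icc hΦ₁ hdet (hs.continuous.abs.rpow_const fun _ => .inr hp.le)
      (hc.comp_left (g := fun t => |t| ^ p) (by simp [hp.ne'])) fun x => by positivity).2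
  have henergy : α * ∫ x, ‖fderiv ℝ u (Φ x)‖ ^ p ≤ ∫ x, ‖fderiv ℝ u x‖ ^ p :=
    (integral_comp_mem_Icc hΦ₁ hdet hDu hDuc fun x => by positivity).1
  have hv := (lam1_mul_integral_le_of_contDiff hp hvs hvc hvΩ).trans hgrad
  have hnonneg := lam1_nonneg p Ω
  rw [div_mul_eq_mul_div, div_le_iff₀' (by positivity)]
  calc α * lam1 p Ω * ∫ x, |u x| ^ p
      ≤ α * lam1 p Ω * (β * ∫ x, |u (Φ x)| ^ p) := by gcongr
    _ = α * β * (lam1 p Ω * ∫ x, |u (Φ x)| ^ p) := by ring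
    _ ≤ α * β * (L ^ p * ∫ x, ‖fderiv ℝ u (Φ x)‖ ^ p) :=
      mul_le_mul_of_nonneg_left hv (by positivity)
    _ = β * L ^ p * (α * ∫ x, ‖fderiv ℝ u (Φ x)‖ ^ p) := by ring
    _ ≤ β * L ^ p * ∫ x, ‖fderiv ℝ u x‖ ^ p := by gcongr

lemma exists_one_add_pow_le_mul_one_sub {K : ℝ} (hK : 1 < K) (n : ℕ) :
    ∃ ε ∈ Ioo (0 : ℝ) 1, (1 + ε) ^ n ≤ K * (1 - ε) := by
  have hlim : ∀ᶠ ε : ℝ in 𝓝 0, (1 + ε) ^ n < K * (1 - ε) :=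
    (by fun_prop : Continuous fun ε : ℝ => (1 + ε) ^ n).continuousAt.eventually_lt
      (by fun_prop : Continuous fun ε : ℝ => K * (1 - ε)).continuousAt (by simpa using hK)
  obtain ⟨ε, hle, hε⟩ :=
    ((hlim.filter_mono nhdsWithin_le_nhds).and (Ioo_mem_nhdsGT (one_pos (α := ℝ)))).exists
  exact ⟨ε, hε, hle.le⟩

lemma eventually_lam1_le_mul_of_preimage_subset
    {g : EuclideanSpace ℝ (Fin N) → EuclideanSpace ℝ (Fin N)} (hg : ContDiff ℝ (⊤ : ℕ∞) g)
    (hgc : HasCompactSupport g) {K : ℝ} (hK : 1 < K) :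
    ∀ᶠ δ : ℝ in 𝓝 0, ∀ p ∈ Ioc (0 : ℝ) 2, ∀ Ω Ω' : Set (EuclideanSpace ℝ (Fin N)), IsOpen Ω' →
      Ω'.Nonempty → (fun x => x + δ • g x) ⁻¹' Ω' ⊆ Ω → lam1 p Ω ≤ K * lam1 p Ω' := by
  obtain ⟨ε, hε, hεK⟩ := exists_one_add_pow_le_mul_one_sub hK 3
  obtain ⟨C, hC⟩ := (hg.of_le (by exact_mod_cast le_top) : ContDiff ℝ 1 g
    ).lipschitzWith_of_hasCompactSupport hgc one_ne_zero
  have hsmall : ∀ᶠ δ : ℝ in 𝓝 0, ‖δ‖₊ * C < 1 :=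
    (by fun_prop : Continuous fun δ : ℝ => ‖δ‖₊ * C).continuousAt.eventually_lt_const (by simp)
  filter_upwards [hsmall, eventually_forall_det_id_add_smul (A := fderiv ℝ g)
    (fun x => norm_fderiv_le_of_lipschitz ℝ hC) hε.1] with δ hδ hdet p hp Ω Ω' hΩ' hne hsub
  obtain ⟨Φ, hΦ⟩ := exists_homeomorph_add_of_lipschitzWith
    ((lipschitzWith_smul δ).comp hC : LipschitzWith _ fun x => δ • g x) hδ
  have hΦ_eq : ⇑Φ = fun x => x + δ • g x := funext hΦ
  have hfderiv (x) : fderiv ℝ Φ x = id ℝ _ + δ • fderiv ℝ g x := by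
    have hgx := (hg.differentiable (by simp) x).hasFDerivAt
    rw [hΦ_eq]
    exact ((hasFDerivAt_id x).add (hgx.const_smul δ)).fderiv
  have hpos : 0 < 1 - ε := by linarith [hε.2]
  have hε₀ : 0 < 1 + ε := by linarith [hε.1]
  have hcompare := lam1_le_of_preimage_subset (Ω := Ω) (Ω' := Ω') (α := 1 - ε) (β := 1 + ε)
    (L := 1 + ε) hp.1 (hΦ_eq ▸ contDiff_id.add (hg.const_smul δ)) hpos.le hε₀ hε₀
    (fun x => by
      obtain ⟨hl, hr⟩ := abs_le.1 (hfderiv x ▸ (hdet x).1)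
      rw [abs_of_nonneg (by linarith)]
      exact ⟨by linarith, by linarith⟩)
    (fun x => hfderiv x ▸ (hdet x).2) hΩ' hne (hΦ_eq ▸ hsub)
  have hnonneg := lam1_nonneg p Ω'
  refine le_of_mul_le_mul_left ?_ hpos
  calc (1 - ε) * lam1 p Ω ≤ (1 + ε) * (1 + ε) ^ p * lam1 p Ω' := hcompare
    _ ≤ (1 + ε) * (1 + ε) ^ (2 : ℝ) * lam1 p Ω' := by
      gcongr
      exacts [by linarith [hε.1], hp.2]
    _ = (1 + ε) ^ 3 * lam1 p Ω' := by norm_cast; ring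
    _ ≤ K * (1 - ε) * lam1 p Ω' := by gcongr
    _ = (1 - ε) * (K * lam1 p Ω') := by ring

end DomainPerturbation

section ContinuityOfEigenvalue

variable {N : ℕ} [NeZero N] {R₀ R₁ : ℝ}

lemma eventually_lam1_Om_le_mul (hR₀ : 0 < R₀) (hR : R₀ < R₁) {s₀ K : ℝ} (hs₀ : |s₀| < R₁ - R₀)
    (hK : 1 < K) : ∀ᶠ st : ℝ × ℝ in 𝓝 (s₀, s₀), ∀ p ∈ Ioc (0 : ℝ) 2,
      lam1 p (Om N R₀ R₁ st.1) ≤ K * lam1 p (Om N R₀ R₁ st.2) := by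
  obtain ⟨a, ha, ha'⟩ := exists_between hs₀
  let η : ContDiffBump (0 : EuclideanSpace ℝ (Fin N)) :=
    ⟨R₀ + a, (R₀ + a + R₁) / 2, by linarith [abs_nonneg s₀], by linarith⟩
  have hη_one {x s} (hs : |s| < a) (hx : dist x (s • e1 N) ≤ R₀) : η x = 1 := by
    refine η.one_of_mem_closedBall (mem_closedBall_zero_iff.2 ?_)
    calc ‖x‖ ≤ ‖x - s • e1 N‖ + ‖s • e1 N‖ := by simpa using norm_add_le (x - s • e1 N) (s • e1 N)
      _ ≤ R₀ + a := by
        rw [norm_smul, norm_e1, mul_one, Real.norm_eq_abs, ← dist_eq_norm]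
        linarith
  have hη_zero {x} (hx : R₁ ≤ ‖x‖) : η x = 0 :=
    η.zero_of_le_dist (by
      rw [dist_zero_right]
      exact le_trans (by linarith : (R₀ + a + R₁) / 2 ≤ R₁) hx)
  have hshift : Tendsto (fun st : ℝ × ℝ => st.2 - st.1) (𝓝 (s₀, s₀)) (𝓝 0) := by
    have : Continuous fun st : ℝ × ℝ => st.2 - st.1 := by fun_prop
    simpa using this.tendsto (s₀, s₀)
  have hnear : ∀ᶠ st : ℝ × ℝ in 𝓝 (s₀, s₀), |st.1| < a :=
    continuous_fst.abs.continuousAt.eventually_lt_const ha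
  filter_upwards [hnear, hshift.eventually (eventually_lam1_le_mul_of_preimage_subset
    (g := fun x => η x • e1 N) (η.contDiff.smul contDiff_const) η.hasCompactSupport.smul_right hK)]
    with ⟨s, t⟩ hs h p hp
  refine h p hp _ _ (isOpen_Om N R₀ R₁ t) (nonempty_Om hR₀ hR t) fun x hx => ?_
  obtain ⟨hx₁, hx₀⟩ := (mem_Om hR₀.ne').1 hx
  dsimp only at hx₁ hx₀
  refine (mem_Om hR₀.ne').2 ⟨?_, ?_⟩
  · by_contra! hx
    rw [hη_zero hx, zero_smul, smul_zero, add_zero] at hx₁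
    exact hx₁.not_ge hx
  · by_contra! hx
    rw [hη_one hs hx, one_smul, dist_eq_norm, add_sub_assoc, ← sub_smul, sub_sub_cancel_left,
      neg_smul, ← sub_eq_add_neg, ← dist_eq_norm] at hx₀
    exact hx₀.not_ge hx

lemma tendsto_of_forall_eventually_le_mul {X : Type*} {l : Filter X} {f : X → ℝ} {a : ℝ}
    (h : ∀ K > 1, ∀ᶠ x in l, f x ≤ K * a ∧ a ≤ K * f x) : Tendsto f l (𝓝 a) := by
  have exists_mul_mem {b : ℝ} {V : Set ℝ} (hV : V ∈ 𝓝 b) : ∃ K > 1, K * b ∈ V := by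
    have hlim : Tendsto (fun K => K * b) (𝓝[>] 1) (𝓝 b) := by
      simpa using ((continuous_mul_const b).tendsto 1).mono_left nhdsWithin_le_nhds
    exact (eventually_mem_nhdsWithin.and (hlim.eventually hV)).exists
  refine tendsto_order.2 ⟨fun b hb => ?_, fun b hb => ?_⟩
  · obtain ⟨K, hK, hKb⟩ := exists_mul_mem (Iio_mem_nhds hb)
    filter_upwards [h K hK] with x hx
    exact lt_of_mul_lt_mul_left (lt_of_lt_of_le hKb hx.2) (by linarith)
  · obtain ⟨K, hK, hKb⟩ := exists_mul_mem (Iio_mem_nhds hb)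
    filter_upwards [h K hK] with x hx
    exact hx.1.trans_lt hKb

theorem continuousOn_of_tendsto_lam1_Om (hR₀ : 0 < R₀) (hR : R₀ < R₁) {Λ : ℝ → ℝ} {S : Set ℝ}
    (hS : ∀ s ∈ S, |s| < R₁ - R₀)
    (hΛ : ∀ s ∈ S, Tendsto (fun p => lam1 p (Om N R₀ R₁ s)) (𝓝[>] 1) (𝓝 (Λ s))) :
    ContinuousOn Λ S := by
  refine fun s₀ hs₀ => tendsto_of_forall_eventually_le_mul fun K hK => ?_
  have hlimit {s t} (hs : s ∈ S) (ht : t ∈ S) (h : ∀ p ∈ Ioc (0 : ℝ) 2,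
      lam1 p (Om N R₀ R₁ s) ≤ K * lam1 p (Om N R₀ R₁ t)) : Λ s ≤ K * Λ t := by
    refine le_of_tendsto_of_tendsto (hΛ s hs) ((hΛ t ht).const_mul K) ?_
    filter_upwards [Ioo_mem_nhdsGT one_lt_two] with p hp
    exact h p ⟨one_pos.trans hp.1, hp.2.le⟩
  have hnear := eventually_lam1_Om_le_mul (N := N) hR₀ hR (hS s₀ hs₀) hK
  have hleft : ∀ᶠ s in 𝓝[S] s₀, ∀ p ∈ Ioc (0 : ℝ) 2, lam1 p (Om N R₀ R₁ s) ≤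
      K * lam1 p (Om N R₀ R₁ s₀) :=
    ((continuous_id.prodMk continuous_const).tendsto s₀ |>.eventually hnear).filter_mono
      nhdsWithin_le_nhds
  have hright : ∀ᶠ s in 𝓝[S] s₀, ∀ p ∈ Ioc (0 : ℝ) 2, lam1 p (Om N R₀ R₁ s₀) ≤
      K * lam1 p (Om N R₀ R₁ s) :=
    ((continuous_const.prodMk continuous_id).tendsto s₀ |>.eventually hnear).filter_mono
      nhdsWithin_le_nhds
  filter_upwards [self_mem_nhdsWithin, hleft, hright] with s hs hl hr
  exact ⟨hlimit hs hs₀ hl, hlimit hs₀ hs hr⟩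

end ContinuityOfEigenvalue

section Calibration

variable {E : Type*} [NormedAddCommGroup E] [InnerProductSpace ℝ E]

/-- The divergence of a vector field, as the trace of its derivative. -/
noncomputable def divergence (X : E → E) (x : E) : ℝ :=
  LinearMap.trace ℝ E (fderiv ℝ X x)

lemma divergence_of_notMem_tsupport {X : E → E} {x : E} (hx : x ∉ tsupport X) :
    divergence X x = 0 := by
  simp [divergence, fderiv_of_notMem_tsupport ℝ hx]

variable [FiniteDimensional ℝ E]

lemma divergence_id (x : E) : divergence (fun y : E => y) x = Module.finrank ℝ E := by
  simp [divergence]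

lemma divergence_smul {g : E → ℝ} {X : E → E} {x : E} (hg : DifferentiableAt ℝ g x)
    (hX : DifferentiableAt ℝ X x) :
    divergence (fun y => g y • X y) x = g x * divergence X x + fderiv ℝ g x (X x) := by
  have htrace := LinearMap.trace_smulRight (R := ℝ) (fderiv ℝ g x : E →ₗ[ℝ] ℝ) (X x)
  rw [divergence, divergence, fderiv_fun_smul hg hX, ContinuousLinearMap.toLinearMap_add, map_add,
    ContinuousLinearMap.toLinearMap_smul, map_smul, smul_eq_mul]
  exact congrArg _ htrace

variable [MeasurableSpace E] [BorelSpace E] {μ : Measure E} [μ.IsAddHaarMeasure]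

lemma integrable_divergence {X : E → E} (hX : ContDiff ℝ 1 X) (hc : HasCompactSupport X) :
    Integrable (divergence X) μ :=
  Continuous.integrable_of_hasCompactSupport
    (((LinearMap.trace ℝ E ∘ₗ ContinuousLinearMap.coeLM ℝ).continuous_of_finiteDimensional).comp
      (hX.continuous_fderiv one_ne_zero))
    (hc.mono' fun _ hx => by_contra fun h => hx (divergence_of_notMem_tsupport h))

lemma integral_divergence_eq_zero {X : E → E} (hX : ContDiff ℝ 1 X) (hc : HasCompactSupport X) :
    ∫ x, divergence X x ∂μ = 0 := by
  let b := stdOrthonormalBasis ℝ E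
  have hdir (v : E) : Integrable (fun x => ⟪v, fderiv ℝ X x v⟫) μ ∧
      ∫ x, ⟪v, fderiv ℝ X x v⟫ ∂μ = 0 := by
    have hf : ContDiff ℝ 1 fun x => ⟪v, X x⟫ := contDiff_const.inner ℝ hX
    have hfc : HasCompactSupport fun x => ⟪v, X x⟫ := hc.comp_left (g := fun y => ⟪v, y⟫) (by simp)
    have hfderiv (x) : ⟪v, fderiv ℝ X x v⟫ = fderiv ℝ (fun x => ⟪v, X x⟫) x v := by
      simp [fderiv_inner_apply ℝ (differentiableAt_const v) (hX.differentiable one_ne_zero x)]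
    simp only [hfderiv]
    have hi : Integrable (fun x => fderiv ℝ (fun x => ⟪v, X x⟫) x v) μ :=
      ((hf.continuous_fderiv one_ne_zero).clm_apply continuous_const
        ).integrable_of_hasCompactSupport (hfc.fderiv_apply ℝ v)
    have hparts := integral_mul_fderiv_eq_neg_fderiv_mul_of_integrable (μ := μ) (v := v)
      (f := fun _ => (1 : ℝ)) (g := fun x => ⟪v, X x⟫) (by simp) (by simpa using hi)
      (by simpa using hf.continuous.integrable_of_hasCompactSupport hfc)
      (fun x _ => differentiableAt_const _) (fun x _ => hf.differentiable one_ne_zero x)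
    exact ⟨hi, by simpa using hparts⟩
  simp only [divergence, LinearMap.trace_eq_sum_inner _ b, ContinuousLinearMap.coe_coe]
  rw [integral_finsetSum _ fun i _ => (hdir (b i)).1]
  exact Finset.sum_eq_zero fun i _ => (hdir (b i)).2

variable {N : ℕ}

-- Integrate `div (|u|ᵖ X)`, which has mean zero, and split `p |u|ᵖ⁻¹ |∇u|` by Young's inequality.
lemma sub_le_lam1_of_le_divergence {Ω : Set (EuclideanSpace ℝ (Fin N))} (hΩ : IsOpen Ω)
    (hne : Ω.Nonempty) {X : EuclideanSpace ℝ (Fin N) → EuclideanSpace ℝ (Fin N)} {h p : ℝ}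
    (hp : 1 < p) (hX : ContDiffOn ℝ 1 X Ω) (hX₁ : ∀ x ∈ Ω, ‖X x‖ ≤ 1)
    (hdiv : ∀ x ∈ Ω, h ≤ divergence X x) : h - (p - 1) ≤ lam1 p Ω := by
  have hp₀ : 0 < p := by linarith
  refine le_lam1 hp₀ hΩ hne fun u hs hc hu => ?_
  have hu₁ : ContDiff ℝ 1 u := hs.of_le (by exact_mod_cast le_top)
  obtain ⟨C, hC⟩ := hu₁.lipschitzWith_of_hasCompactSupport hc one_ne_zero
  let g := fun x => ‖u x‖ ^ p
  have hg : ContDiff ℝ 1 g := hu₁.norm_rpow hp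
  let Y := fun x => g x • X x
  have hYu : Function.support Y ⊆ Function.support u := fun x hx hux =>
    hx (by simp [Y, g, hux, hp₀.ne'])
  have hY : ContDiff ℝ 1 Y := contDiff_iff_contDiffAt.2 fun x => by
    by_cases hx : x ∈ tsupport Y
    · exact hg.contDiffAt.smul (hX.contDiffAt (hΩ.mem_nhds (hu (closure_mono hYu hx))))
    · exact contDiffAt_const.congr_of_eventuallyEq (notMem_tsupport_iff_eventuallyEq.1 hx)
  have hYc : HasCompactSupport Y := hc.mono hYu
  have hpointwise (x) : (h - (p - 1)) * |u x| ^ p ≤ ‖fderiv ℝ u x‖ ^ p + divergence Y x := by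
    by_cases hx : x ∈ tsupport u
    · have hxΩ := hu hx
      have hgrad : |fderiv ℝ g x (X x)| ≤ p * (|u x| ^ (p - 1) * ‖fderiv ℝ u x‖) :=
        calc |fderiv ℝ g x (X x)| ≤ ‖fderiv ℝ g x‖ * ‖X x‖ := (fderiv ℝ g x).le_opNorm _
          _ ≤ ‖fderiv ℝ g x‖ := mul_le_of_le_one_right (norm_nonneg _) (hX₁ x hxΩ)
          _ ≤ p * |u x| ^ (p - 1) * ‖fderiv ℝ u x‖ :=
            norm_fderiv_norm_rpow_le (hu₁.differentiable one_ne_zero) hp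
          _ = p * (|u x| ^ (p - 1) * ‖fderiv ℝ u x‖) := mul_assoc _ _ _
      have young := mul_rpow_sub_one_mul_le (abs_nonneg (u x)) (norm_nonneg (fderiv ℝ u x)) hp
      have hdivY : divergence Y x = g x * divergence X x + fderiv ℝ g x (X x) :=
        divergence_smul (hg.differentiable one_ne_zero x)
          ((hX.contDiffAt (hΩ.mem_nhds hxΩ)).differentiableAt one_ne_zero)
      have hmul : |u x| ^ p * h ≤ g x * divergence X x :=
        mul_le_mul_of_nonneg_left (hdiv x hxΩ) (by positivity)
      linarith [neg_abs_le (fderiv ℝ g x (X x))]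
    · simp [divergence_of_notMem_tsupport fun h => hx (closure_mono hYu h),
        image_eq_zero_of_notMem_tsupport hx, fderiv_of_notMem_tsupport ℝ hx, hp₀.ne']
  have hgradi := integrable_norm_fderiv_rpow (μ := volume) hp₀ hC hc
  have hint := integral_mono ((integrable_abs_rpow hp₀ hs.continuous hc).const_mul _)
    (hgradi.add (integrable_divergence (μ := volume) hY hYc)) hpointwise
  rwa [integral_const_mul, integral_add' hgradi (integrable_divergence hY hYc),
    integral_divergence_eq_zero hY hYc, add_zero] at hint

end Calibration

section ConcentricAnnulus

lemma contDiffAt_radial {E : Type*} [NormedAddCommGroup E] [InnerProductSpace ℝ E] (a c : ℝ)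
    (n : ℕ) {x : E} (hx : x ≠ 0) : ContDiffAt ℝ 1 (fun y : E => a + c * (‖y‖ ^ n)⁻¹) x :=
  contDiffAt_const.add (contDiffAt_const.mul
    (((contDiffAt_norm ℝ hx).pow n).inv (pow_ne_zero n (norm_ne_zero_iff.2 hx))))

lemma divergence_radial_smul {E : Type*} [NormedAddCommGroup E] [InnerProductSpace ℝ E]
    [FiniteDimensional ℝ E] (a c : ℝ) {x : E} (hx : x ≠ 0) :
    divergence (fun y => (a + c * (‖y‖ ^ Module.finrank ℝ E)⁻¹) • y) x =
      Module.finrank ℝ E * a := by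
  set n := Module.finrank ℝ E
  have hx₀ : ‖x‖ ≠ 0 := norm_ne_zero_iff.2 hx
  have hnorm : DifferentiableAt ℝ (fun y : E => ‖y‖) x :=
    (contDiffAt_norm (n := 1) ℝ hx).differentiableAt one_ne_zero
  have hprofile := ((((hasDerivAt_pow n ‖x‖).inv (pow_ne_zero n hx₀)).const_mul c).const_add a
    ).comp_hasFDerivAt x hnorm.hasFDerivAt
  have hradial : fderiv ℝ (fun y : E => a + c * (‖y‖ ^ n)⁻¹) x x = -(n * (c * (‖x‖ ^ n)⁻¹)) := by
    refine (congrArg (· x) hprofile.fderiv).trans ?_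
    rw [_root_.smul_apply, hnorm.fderiv_norm_self, smul_eq_mul]
    rcases n with _ | n
    · simp
    · simp only [Nat.add_sub_cancel]
      field_simp
      ring
  rw [divergence_smul ((contDiffAt_radial a c n hx).differentiableAt one_ne_zero)
    differentiableAt_fun_id, divergence_id, hradial]
  ring

/-- The ratio of perimeter to volume of the concentric annulus in `ℝ^N`: its Cheeger constant,
and the limit of `lam1 p (Om N R₀ R₁ 0)` as `p → 1`. -/
noncomputable def annulusRatio (N : ℕ) (R₀ R₁ : ℝ) : ℝ :=
  N * ((R₁ ^ (N - 1) + R₀ ^ (N - 1)) / (R₁ ^ N - R₀ ^ N))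

/-- The coefficient of the radial calibration `x ↦ annulusProfile N R₀ R₁ ‖x‖ • x` of the
concentric annulus. Among the profiles `a + c r⁻ᴺ`, whose fields have constant divergence, it is
the one whose field is the outward unit normal on both boundary spheres. -/
noncomputable def annulusProfile (N : ℕ) (R₀ R₁ r : ℝ) : ℝ :=
  (R₁ ^ (N - 1) + R₀ ^ (N - 1)) / (R₁ ^ N - R₀ ^ N) +
    -((R₀ * R₁) ^ (N - 1) * (R₀ + R₁)) / (R₁ ^ N - R₀ ^ N) * (r ^ N)⁻¹

variable {N : ℕ} [NeZero N] {R₀ R₁ : ℝ}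

lemma abs_annulusProfile_mul_le_one (hR₀ : 0 < R₀) (hR : R₀ < R₁) {r : ℝ} (hr : r ∈ Icc R₀ R₁) :
    |annulusProfile N R₀ R₁ r * r| ≤ 1 := by
  obtain ⟨n, rfl⟩ := Nat.exists_eq_succ_of_ne_zero (NeZero.ne N)
  have hR₁ : 0 < R₁ := hR₀.trans hR
  have hvol : 0 < R₁ ^ (n + 1) - R₀ ^ (n + 1) :=
    sub_pos.2 (pow_lt_pow_left₀ hR hR₀.le n.succ_ne_zero)
  have hmono : MonotoneOn (fun r => annulusProfile (n + 1) R₀ R₁ r * r) (Ioi 0) := by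
    intro r hr s hs hrs
    have eq_add {r : ℝ} (hr : 0 < r) : annulusProfile (n + 1) R₀ R₁ r * r =
        (R₁ ^ n + R₀ ^ n) / (R₁ ^ (n + 1) - R₀ ^ (n + 1)) * r -
          (R₀ * R₁) ^ n * (R₀ + R₁) / (R₁ ^ (n + 1) - R₀ ^ (n + 1)) * (r ^ n)⁻¹ := by
      simp only [annulusProfile, Nat.add_sub_cancel]
      field_simp
      ring
    have hr₀ : 0 < r := hr
    dsimp only
    rw [eq_add hr, eq_add hs]
    gcongr
  have hinner : annulusProfile (n + 1) R₀ R₁ R₀ * R₀ = -1 := by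
    simp only [annulusProfile, Nat.add_sub_cancel]
    field_simp
    ring
  have houter : annulusProfile (n + 1) R₀ R₁ R₁ * R₁ = 1 := by
    simp only [annulusProfile, Nat.add_sub_cancel]
    field_simp
    ring
  have hr₀ : 0 < r := hR₀.trans_le hr.1
  exact abs_le.2 ⟨hinner ▸ hmono hR₀ hr₀ hr.1, houter ▸ hmono hr₀ hR₁ hr.2⟩

lemma annulusRatio_mul_sub (hR₀ : 0 < R₀) (hR : R₀ < R₁) :
    annulusRatio N R₀ R₁ * (R₁ ^ N - R₀ ^ N) = N * (R₁ ^ (N - 1) + R₀ ^ (N - 1)) := by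
  have hvol : R₁ ^ N - R₀ ^ N ≠ 0 :=
    (sub_pos.2 (pow_lt_pow_left₀ hR hR₀.le (NeZero.ne N))).ne'
  rw [annulusRatio, mul_assoc, div_mul_cancel₀ _ hvol]

lemma annulusRatio_pos (hR₀ : 0 < R₀) (hR : R₀ < R₁) : 0 < annulusRatio N R₀ R₁ := by
  have hvol : 0 < R₁ ^ N - R₀ ^ N := sub_pos.2 (pow_lt_pow_left₀ hR hR₀.le (NeZero.ne N))
  have hR₁ : 0 < R₁ := hR₀.trans hR
  have hN : 0 < N := NeZero.pos N
  rw [annulusRatio]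
  positivity

theorem annulusRatio_sub_le_lam1_Om_zero (hR₀ : 0 < R₀) (hR : R₀ < R₁) {p : ℝ} (hp : 1 < p) :
    annulusRatio N R₀ R₁ - (p - 1) ≤ lam1 p (Om N R₀ R₁ 0) := by
  have hmem {x : EuclideanSpace ℝ (Fin N)} (hx : x ∈ Om N R₀ R₁ 0) : R₀ < ‖x‖ ∧ ‖x‖ < R₁ := by
    simpa using ((mem_Om hR₀.ne').1 hx).symm
  have hne {x : EuclideanSpace ℝ (Fin N)} (hx : x ∈ Om N R₀ R₁ 0) : x ≠ 0 :=
    norm_pos_iff.1 (hR₀.trans (hmem hx).1)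
  refine sub_le_lam1_of_le_divergence (isOpen_Om N R₀ R₁ 0) (nonempty_Om hR₀ hR 0)
    (X := fun x => annulusProfile N R₀ R₁ ‖x‖ • x) hp
    (fun x hx => ((contDiffAt_radial _ _ N (hne hx)).smul contDiffAt_id).contDiffWithinAt)
    (fun x hx => ?_) (fun x hx => ?_)
  · obtain ⟨h₀, h₁⟩ := hmem hx
    simpa [norm_smul, abs_mul] using
      abs_annulusProfile_mul_le_one (N := N) hR₀ hR ⟨h₀.le, h₁.le⟩
  · have hdiv := divergence_radial_smul ((R₁ ^ (N - 1) + R₀ ^ (N - 1)) / (R₁ ^ N - R₀ ^ N))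
      (-((R₀ * R₁) ^ (N - 1) * (R₀ + R₁)) / (R₁ ^ N - R₀ ^ N)) (hne hx)
    rw [finrank_euclideanSpace_fin] at hdiv
    exact hdiv.ge

end ConcentricAnnulus

section LimitOfEigenvalue

lemma tendsto_integral_rpow_nhdsGT_one {X : Type*} [MeasurableSpace X] {μ : Measure X} {f : X → ℝ}
    (hf : ∀ x, 0 ≤ f x) (hi : Integrable f μ) (hi₂ : Integrable (fun x => f x ^ (2 : ℝ)) μ) :
    Tendsto (fun p : ℝ => ∫ x, f x ^ p ∂μ) (𝓝[>] 1) (𝓝 (∫ x, f x ∂μ)) := by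
  refine tendsto_integral_filter_of_dominated_convergence (fun x => f x + f x ^ (2 : ℝ))
    (.of_forall fun p => (hi.aemeasurable.pow_const p).aestronglyMeasurable) ?_ (hi.add hi₂)
    (.of_forall fun x => ?_)
  · filter_upwards [Ioo_mem_nhdsGT one_lt_two] with p hp
    refine .of_forall fun x => ?_
    rw [Real.norm_of_nonneg (Real.rpow_nonneg (hf x) _)]
    rcases le_total (f x) 1 with h | h
    · have hle := Real.rpow_le_rpow_of_exponent_ge_of_imp (hf x) h hp.1.le
        fun _ h₀ => absurd h₀ (zero_lt_one.trans hp.1).ne'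
      rw [Real.rpow_one] at hle
      exact hle.trans (le_add_of_nonneg_right (Real.rpow_nonneg (hf x) _))
    · exact (Real.rpow_le_rpow_of_exponent_le h hp.2.le).trans (le_add_of_nonneg_left (hf x))
  · have hcont : ContinuousAt (fun p : ℝ => f x ^ p) 1 := Real.continuousAt_const_rpow' one_ne_zero
    simpa using hcont.tendsto.mono_left nhdsWithin_le_nhds

lemma mul_integral_abs_le_of_tendsto_lam1 {N : ℕ} {Ω : Set (EuclideanSpace ℝ (Fin N))}
    (hΩ : IsOpen Ω) {l : ℝ} (hl : Tendsto (fun p => lam1 p Ω) (𝓝[>] 1) (𝓝 l))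
    {w : EuclideanSpace ℝ (Fin N) → ℝ} {C : NNReal} (hw : LipschitzWith C w)
    (hc : HasCompactSupport w) (hs : tsupport w ⊆ Ω) :
    l * ∫ x, |w x| ≤ ∫ x, ‖fderiv ℝ w x‖ := by
  have hmass := tendsto_integral_rpow_nhdsGT_one (fun x => abs_nonneg (w x))
    (by simpa using integrable_abs_rpow (μ := volume) one_pos hw.continuous hc)
    (integrable_abs_rpow two_pos hw.continuous hc)
  have henergy := tendsto_integral_rpow_nhdsGT_one (fun x => norm_nonneg (fderiv ℝ w x))
    (integrable_norm_fderiv (μ := volume) hw hc) (integrable_norm_fderiv_rpow two_pos hw hc)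
  refine le_of_tendsto_of_tendsto (hl.mul hmass) henergy ?_
  filter_upwards [self_mem_nhdsWithin] with p hp
  exact lam1_mul_integral_le (le_of_lt hp) hΩ hw hc hs

end LimitOfEigenvalue

section BallCutoffs

variable {E : Type*} [NormedAddCommGroup E]

/-- `v` is a Lipschitz cutoff for the balls of radii `r < R` around `c`: it takes values in
`[0, 1]`, it is `1` on the smaller ball and `0` off the larger one, and its Lipschitz constant is
the optimal `(R - r)⁻¹`. -/
structure IsBallCutoff (c : E) (r R : ℝ) (v : E → ℝ) : Prop where
  lipschitzWith : LipschitzWith (R - r).toNNReal⁻¹ v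
  mem_Icc (x : E) : v x ∈ Icc 0 1
  eq_one {x : E} (hx : dist x c ≤ r) : v x = 1
  eq_zero {x : E} (hx : R ≤ dist x c) : v x = 0

variable {c : E} {r R : ℝ} {v : E → ℝ}

lemma IsBallCutoff.tsupport_subset (hv : IsBallCutoff c r R v) : tsupport v ⊆ closedBall c R :=
  closure_minimal (fun _ hx => le_of_not_ge fun h => hx (hv.eq_zero h)) isClosed_closedBall

variable [NormedSpace ℝ E]

lemma exists_isBallCutoff (c : E) (hr : 0 ≤ r) (hrR : r < R) : ∃ v, IsBallCutoff c r R v := by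
  have hδ : 0 < R - r := sub_pos.2 hrR
  refine ⟨fun x => thickenedIndicator hδ (closedBall c r) x,
    LipschitzWith.subtype_val _ |>.comp (lipschitzWith_thickenedIndicator hδ _) |>.weaken ?_,
    fun x => ⟨NNReal.coe_nonneg _, thickenedIndicator_le_one hδ _ x⟩, fun {x} hx => ?_,
    fun {x} hx => ?_⟩
  · simp
  · simp [thickenedIndicator_one hδ _ (mem_closedBall.2 hx)]
  · have hx' : x ∉ thickening (R - r) (closedBall c r) := by
      simpa [thickening_closedBall hδ hr] using hx
    simp [thickenedIndicator_zero hδ _ hx']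

namespace IsBallCutoff

lemma fderiv_eq_zero (hv : IsBallCutoff c r R v) {x : E}
    (hx : x ∉ closedBall c R \ closedBall c r) : fderiv ℝ v x = 0 := by
  by_cases hxR : dist x c ≤ R
  · have hxr : v x = 1 := hv.eq_one (by_contra fun h => hx ⟨hxR, h⟩)
    exact IsLocalMax.fderiv_eq_zero (.of_forall fun y => hxr ▸ (hv.mem_Icc y).2)
  · have hx₀ : v x = 0 := hv.eq_zero (le_of_not_ge hxR)
    exact IsLocalMin.fderiv_eq_zero (.of_forall fun y => hx₀ ▸ (hv.mem_Icc y).1)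

variable [FiniteDimensional ℝ E]

lemma hasCompactSupport (hv : IsBallCutoff c r R v) : HasCompactSupport v :=
  have := FiniteDimensional.proper_real E
  (isCompact_closedBall c R).of_isClosed_subset (isClosed_tsupport _) hv.tsupport_subset

variable [MeasurableSpace E] [BorelSpace E] {μ : Measure E} [μ.IsAddHaarMeasure]

lemma integrable (hv : IsBallCutoff c r R v) : Integrable v μ :=
  hv.lipschitzWith.continuous.integrable_of_hasCompactSupport hv.hasCompactSupport

lemma pow_mul_le_integral (hv : IsBallCutoff c r R v) (hr : 0 ≤ r) :
    r ^ Module.finrank ℝ E * μ.real (ball 0 1) ≤ ∫ x, v x ∂μ := by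
  have hsub : closedBall c r ⊆ {x | 1 ≤ v x} := fun x hx => (hv.eq_one hx).ge
  have hmarkov := mul_meas_ge_le_integral_of_nonneg (.of_forall fun x => (hv.mem_Icc x).1)
    (hv.integrable (μ := μ)) 1
  rw [one_mul] at hmarkov
  rw [← Measure.addHaar_real_closedBall μ c hr]
  exact (measureReal_mono hsub (hv.integrable.measure_ge_lt_top one_pos).ne).trans hmarkov

lemma integral_le_pow_mul (hv : IsBallCutoff c r R v) (hR : 0 ≤ R) :
    ∫ x, v x ∂μ ≤ R ^ Module.finrank ℝ E * μ.real (ball 0 1) := by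
  have := FiniteDimensional.proper_real E
  rw [← Measure.addHaar_real_closedBall μ c hR, ← one_mul (μ.real _),
    ← setIntegral_eq_integral_of_forall_compl_eq_zero fun x hx =>
      image_eq_zero_of_notMem_tsupport fun h => hx (hv.tsupport_subset h)]
  exact (le_abs_self _).trans (norm_setIntegral_le_of_norm_le_const measure_closedBall_lt_top
    fun x _ => (Real.norm_of_nonneg (hv.mem_Icc x).1).trans_le (hv.mem_Icc x).2)

lemma integral_norm_fderiv_le (hv : IsBallCutoff c r R v) (hr : 0 ≤ r) (hrR : r < R) :
    ∫ x, ‖fderiv ℝ v x‖ ∂μ ≤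
      Module.finrank ℝ E * R ^ (Module.finrank ℝ E - 1) * μ.real (ball 0 1) := by
  have := FiniteDimensional.proper_real E
  set n := Module.finrank ℝ E
  have hδ : 0 < R - r := sub_pos.2 hrR
  have hmeasure :
      μ.real (closedBall c R \ closedBall c r) = (R ^ n - r ^ n) * μ.real (ball 0 1) := by
    rw [measureReal_sdiff (closedBall_subset_closedBall hrR.le) measurableSet_closedBall
      measure_closedBall_lt_top.ne, Measure.addHaar_real_closedBall μ c (hr.trans hrR.le),
      Measure.addHaar_real_closedBall μ c hr, sub_mul]
  have hpow : R ^ n - r ^ n ≤ (R - r) * n * R ^ (n - 1) := by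
    have h := (le_abs_self _).trans (abs_pow_sub_pow_le R r n)
    rwa [abs_of_pos hδ, abs_of_nonneg hr, abs_of_nonneg (hr.trans hrR.le), max_eq_left hrR.le] at h
  have hshell : ∫ x in closedBall c R \ closedBall c r, ‖fderiv ℝ v x‖ ∂μ ≤
      (R - r)⁻¹ * μ.real (closedBall c R \ closedBall c r) := by
    refine (Real.le_norm_self _).trans (norm_setIntegral_le_of_norm_le_const
      ((measure_mono sdiff_subset).trans_lt measure_closedBall_lt_top) fun x _ => ?_)
    simpa [hδ.le] using norm_fderiv_le_of_lipschitz ℝ hv.lipschitzWith (x₀ := x)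
  calc ∫ x, ‖fderiv ℝ v x‖ ∂μ
      = ∫ x in closedBall c R \ closedBall c r, ‖fderiv ℝ v x‖ ∂μ :=
        (setIntegral_eq_integral_of_forall_compl_eq_zero fun x hx => by
          rw [hv.fderiv_eq_zero hx, norm_zero]).symm
    _ ≤ (R - r)⁻¹ * ((R ^ n - r ^ n) * μ.real (ball 0 1)) := hmeasure ▸ hshell
    _ ≤ (R - r)⁻¹ * ((R - r) * n * R ^ (n - 1) * μ.real (ball 0 1)) := by gcongr
    _ = n * R ^ (n - 1) * μ.real (ball 0 1) := by field_simp

end IsBallCutoff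

end BallCutoffs

section HalfSpaceRamp

variable {E : Type*} [NormedAddCommGroup E] [InnerProductSpace ℝ E] {e : E} {a : ℝ} {x : E}

/-- The function of `⟪e, x⟫` that rises linearly from `0` at `⟪e, x⟫ = a` to `1` at
`⟪e, x⟫ = a + 1` and is constant on either side; multiplying by `1 - halfSpaceRamp e a` cuts a
function off inside the half-space `{x | a < ⟪e, x⟫}`. -/
noncomputable def halfSpaceRamp (e : E) (a : ℝ) (x : E) : ℝ :=
  projIcc (0 : ℝ) 1 zero_le_one (⟪e, x⟫ - a)

lemma halfSpaceRamp_mem_Icc (e : E) (a : ℝ) (x : E) : halfSpaceRamp e a x ∈ Icc 0 1 :=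
  Subtype.coe_prop _

lemma halfSpaceRamp_of_le (hx : ⟪e, x⟫ ≤ a) : halfSpaceRamp e a x = 0 := by
  rw [halfSpaceRamp, projIcc_of_le_left _ (sub_nonpos.2 hx)]

lemma halfSpaceRamp_le_inner_sub (hx : a ≤ ⟪e, x⟫) : halfSpaceRamp e a x ≤ ⟪e, x⟫ - a := by
  rw [halfSpaceRamp, coe_projIcc]
  exact max_le (sub_nonneg.2 hx) (min_le_right _ _)

lemma lipschitzWith_halfSpaceRamp (he : ‖e‖ = 1) (a : ℝ) : LipschitzWith 1 (halfSpaceRamp e a) := by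
  have hinner : LipschitzWith 1 fun x => ⟪e, x⟫ - a := .of_dist_le_mul fun x y => by
    have h := abs_real_inner_le_norm e (x - y)
    rwa [he, one_mul, inner_sub_right, ← sub_sub_sub_cancel_right _ _ a, ← Real.dist_eq,
      ← dist_eq_norm, ← one_mul (dist x y)] at h
  have hproj := (LipschitzWith.subtype_val _).comp
    ((LipschitzWith.projIcc zero_le_one).comp hinner)
  rwa [mul_one, mul_one] at hproj

lemma lineDeriv_halfSpaceRamp_nonneg (e : E) (a : ℝ) (x : E) :
    0 ≤ lineDeriv ℝ (halfSpaceRamp e a) x e := by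
  refine Monotone.deriv_nonneg fun s t hst =>
    Subtype.coe_le_coe.2 (monotone_projIcc zero_le_one ?_)
  rw [inner_add_right, inner_add_right, real_inner_smul_right, real_inner_smul_right]
  have := real_inner_self_nonneg (x := e)
  gcongr

lemma lineDeriv_halfSpaceRamp_eq_one (he : ‖e‖ = 1) (hx : ⟪e, x⟫ ∈ Ioo a (a + 1)) :
    lineDeriv ℝ (halfSpaceRamp e a) x e = 1 := by
  have hlocal : halfSpaceRamp e a =ᶠ[𝓝 x] fun y => ⟪e, y⟫ - a := by
    have hmem := (show Continuous fun y : E => ⟪e, y⟫ by fun_prop).continuousAt.preimage_mem_nhds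
      (isOpen_Ioo.mem_nhds hx)
    filter_upwards [hmem] with y hy
    rw [halfSpaceRamp, projIcc_of_mem _ ⟨sub_nonneg.2 hy.1.le, by linarith [hy.2]⟩]
  have hfderiv := (((innerSL ℝ e).hasFDerivAt (x := x)).sub_const a).hasLineDerivAt e
  rw [hlocal.lineDeriv_eq]
  simpa [he] using hfderiv.lineDeriv

-- The ramp factors through `⟪e, ·⟫`, so its gradient is parallel to `e`.
lemma norm_fderiv_halfSpaceRamp_le (he : ‖e‖ = 1)
    (hx : DifferentiableAt ℝ (halfSpaceRamp e a) x) :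
    ‖fderiv ℝ (halfSpaceRamp e a) x‖ ≤ lineDeriv ℝ (halfSpaceRamp e a) x e := by
  have hfderiv (v : E) : fderiv ℝ (halfSpaceRamp e a) x v =
      ⟪e, v⟫ * lineDeriv ℝ (halfSpaceRamp e a) x e := by
    have hline : lineDeriv ℝ (halfSpaceRamp e a) x v =
        lineDeriv ℝ (halfSpaceRamp e a) x (⟪e, v⟫ • e) := by
      simp only [lineDeriv, halfSpaceRamp, inner_add_right, real_inner_smul_right,
        real_inner_self_eq_norm_sq, he, one_pow, mul_one]
    rw [← hx.lineDeriv_eq_fderiv, hline, hx.lineDeriv_eq_fderiv, map_smul,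
      ← hx.lineDeriv_eq_fderiv, smul_eq_mul]
  refine ContinuousLinearMap.opNorm_le_bound _ (lineDeriv_halfSpaceRamp_nonneg e a x) fun v => ?_
  have hinner := abs_real_inner_le_norm e v
  rw [he, one_mul] at hinner
  rw [hfderiv, norm_mul, Real.norm_of_nonneg (lineDeriv_halfSpaceRamp_nonneg e a x), mul_comm]
  exact mul_le_mul_of_nonneg_left hinner (lineDeriv_halfSpaceRamp_nonneg e a x)

end HalfSpaceRamp

section IntegrationByParts

variable {E : Type*} [NormedAddCommGroup E] [NormedSpace ℝ E] [MeasurableSpace E]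
  [BorelSpace E] {μ : Measure E} {φ v : E → ℝ} {C D : NNReal}

section Integrability

variable [IsFiniteMeasureOnCompacts μ]

lemma integrable_lineDeriv_mul (hφ : LipschitzWith C φ) (hv : LipschitzWith D v)
    (hc : HasCompactSupport v) (e : E) : Integrable (fun x => lineDeriv ℝ φ x e * v x) μ :=
  (hv.continuous.integrable_of_hasCompactSupport hc).bdd_mul
    (measurable_lineDeriv hφ.continuous).aestronglyMeasurable
    (.of_forall fun _ => norm_lineDeriv_le_of_lipschitz ℝ hφ)

lemma integrable_mul_norm_fderiv (hφ : Continuous φ) (hφ₁ : ∀ x, φ x ∈ Icc 0 1)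
    (hv : LipschitzWith D v) (hc : HasCompactSupport v) :
    Integrable (fun x => φ x * ‖fderiv ℝ v x‖) μ :=
  (integrable_norm_fderiv hv hc).bdd_mul hφ.aestronglyMeasurable
    (.of_forall fun x => (Real.norm_of_nonneg (hφ₁ x).1).trans_le (hφ₁ x).2)

end Integrability

variable [FiniteDimensional ℝ E] [μ.IsAddHaarMeasure]

lemma integral_lineDeriv_mul_le (hφ : LipschitzWith C φ) (hφ₁ : ∀ x, φ x ∈ Icc 0 1)
    (hv : LipschitzWith D v) (hc : HasCompactSupport v) {e : E} (he : ‖e‖ ≤ 1) :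
    ∫ x, lineDeriv ℝ φ x e * v x ∂μ ≤ ∫ x, φ x * ‖fderiv ℝ v x‖ ∂μ := by
  have hint := integrable_mul_norm_fderiv (μ := μ) hφ.continuous hφ₁ hv hc
  have hbound : ∀ᵐ x ∂μ, |lineDeriv ℝ v x (-e) * φ x| ≤ φ x * ‖fderiv ℝ v x‖ := by
    filter_upwards [hv.ae_differentiableAt] with x hx
    rw [hx.lineDeriv_eq_fderiv, abs_mul, abs_of_nonneg (hφ₁ x).1, mul_comm]
    have hle := (fderiv ℝ v x).le_opNorm (-e)
    rw [norm_neg] at hle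
    exact mul_le_mul_of_nonneg_left
      (hle.trans (mul_le_of_le_one_right (norm_nonneg _) he)) (hφ₁ x).1
  rw [hφ.integral_lineDeriv_mul_eq hv hc]
  refine integral_mono_ae (hint.mono' ?_ hbound) hint (hbound.mono fun x => (le_abs_self _).trans)
  exact ((measurable_lineDeriv hv.continuous).mul hφ.continuous.measurable).aestronglyMeasurable

end IntegrationByParts

section CornerTruncation

lemma lipschitzWith_mul_of_mem_Icc {X : Type*} [PseudoMetricSpace X] {f g : X → ℝ}
    {C D : NNReal} (hf : LipschitzWith C f) (hg : LipschitzWith D g) (hf₁ : ∀ x, f x ∈ Icc 0 1)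
    (hg₁ : ∀ x, g x ∈ Icc 0 1) : LipschitzWith (C + D) fun x => f x * g x := by
  refine .of_dist_le_mul fun x y => ?_
  have hfxy := hf.dist_le_mul x y
  have hgxy := hg.dist_le_mul x y
  rw [Real.dist_eq] at hfxy hgxy ⊢
  calc |f x * g x - f y * g y| = |(f x - f y) * g x + f y * (g x - g y)| := by ring_nf
    _ ≤ |f x - f y| * g x + f y * |g x - g y| := by
      refine (abs_add_le _ _).trans_eq ?_
      rw [abs_mul, abs_mul, abs_of_nonneg (hg₁ x).1, abs_of_nonneg (hf₁ y).1]
    _ ≤ |f x - f y| + |g x - g y| := add_le_add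
      (mul_le_of_le_one_right (abs_nonneg _) (hg₁ x).2)
      (mul_le_of_le_one_left (abs_nonneg _) (hf₁ y).2)
    _ ≤ (C + D : NNReal) * dist x y := by
      push_cast
      linarith

variable {E : Type*} [NormedAddCommGroup E] [InnerProductSpace ℝ E] {e : E} {a : ℝ}
  {v₁ v₂ : E → ℝ} {C₁ C₂ : NNReal}

/-- The competitor of the strict inequality: from a cutoff `v₁` of the outer ball it removes a
cutoff `v₂` of the inner ball and the half-space `{x | a < ⟪e, x⟫}` around the point where the two
balls nearly touch. -/
noncomputable def cornerTruncation (e : E) (a : ℝ) (v₁ v₂ : E → ℝ) (x : E) : ℝ :=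
  v₁ x * (1 - v₂ x) * (1 - halfSpaceRamp e a x)

lemma sub_sub_le_cornerTruncation (hv₁ : ∀ x, v₁ x ∈ Icc 0 1) (hv₂ : ∀ x, v₂ x ∈ Icc 0 1) (x : E) :
    v₁ x - v₂ x - halfSpaceRamp e a x * v₁ x ≤ cornerTruncation e a v₁ v₂ x := by
  have h₁ := hv₁ x
  have h₂ := hv₂ x
  have hramp := halfSpaceRamp_mem_Icc e a x
  have hcross := mul_nonneg (mul_nonneg h₁.1 h₂.1) hramp.1
  have hle := mul_le_of_le_one_left h₂.1 h₁.2
  rw [cornerTruncation]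
  linarith

lemma hasCompactSupport_cornerTruncation (hc : HasCompactSupport v₁) :
    HasCompactSupport (cornerTruncation e a v₁ v₂) :=
  hc.mono fun x hx h₀ => hx (by simp [cornerTruncation, h₀])

lemma exists_lipschitzWith_cornerTruncation (he : ‖e‖ = 1) (a : ℝ) (h₁ : LipschitzWith C₁ v₁)
    (h₂ : LipschitzWith C₂ v₂) (hv₁ : ∀ x, v₁ x ∈ Icc 0 1) (hv₂ : ∀ x, v₂ x ∈ Icc 0 1) :
    ∃ C, LipschitzWith C (cornerTruncation e a v₁ v₂) := by
  have hsub (x) : 1 - v₂ x ∈ Icc (0 : ℝ) 1 := Icc.mem_iff_one_sub_mem.1 (hv₂ x)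
  have hmul := lipschitzWith_mul_of_mem_Icc h₁ ((LipschitzWith.const 1).sub h₂) hv₁ hsub
  exact ⟨_, lipschitzWith_mul_of_mem_Icc hmul
    ((LipschitzWith.const 1).sub (lipschitzWith_halfSpaceRamp he a))
    (fun x => unitInterval.mul_mem (hv₁ x) (hsub x))
    fun x => Icc.mem_iff_one_sub_mem.1 (halfSpaceRamp_mem_Icc e a x)⟩

lemma norm_fderiv_cornerTruncation_le (he : ‖e‖ = 1) (hv₁ : ∀ x, v₁ x ∈ Icc 0 1)
    (hv₂ : ∀ x, v₂ x ∈ Icc 0 1) {x : E} (h₁ : DifferentiableAt ℝ v₁ x)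
    (h₂ : DifferentiableAt ℝ v₂ x) (hramp : DifferentiableAt ℝ (halfSpaceRamp e a) x) :
    ‖fderiv ℝ (cornerTruncation e a v₁ v₂) x‖ ≤
      (1 - halfSpaceRamp e a x) * (‖fderiv ℝ v₁ x‖ + ‖fderiv ℝ v₂ x‖) +
        lineDeriv ℝ (halfSpaceRamp e a) x e * v₁ x := by
  have hfderiv : fderiv ℝ (cornerTruncation e a v₁ v₂) x =
      (v₁ x * (1 - v₂ x)) • (-fderiv ℝ (halfSpaceRamp e a) x) +
        (1 - halfSpaceRamp e a x) •
          (v₁ x • (-fderiv ℝ v₂ x) + (1 - v₂ x) • fderiv ℝ v₁ x) :=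
    ((h₁.hasFDerivAt.mul (h₂.hasFDerivAt.const_sub 1)).mul
      (hramp.hasFDerivAt.const_sub 1)).fderiv
  have h₁x := hv₁ x
  have h₂x : 1 - v₂ x ∈ Icc (0 : ℝ) 1 := Icc.mem_iff_one_sub_mem.1 (hv₂ x)
  have hrampx := sub_nonneg.2 (halfSpaceRamp_mem_Icc e a x).2
  have hcorner : ‖(v₁ x * (1 - v₂ x)) • (-fderiv ℝ (halfSpaceRamp e a) x)‖ ≤
      lineDeriv ℝ (halfSpaceRamp e a) x e * v₁ x := by
    rw [norm_smul, norm_neg, Real.norm_of_nonneg (mul_nonneg h₁x.1 h₂x.1), mul_comm]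
    exact mul_le_mul (norm_fderiv_halfSpaceRamp_le he hramp) (mul_le_of_le_one_right h₁x.1 h₂x.2)
      (mul_nonneg h₁x.1 h₂x.1) (lineDeriv_halfSpaceRamp_nonneg e a x)
  have hannulus : ‖v₁ x • (-fderiv ℝ v₂ x) + (1 - v₂ x) • fderiv ℝ v₁ x‖ ≤
      ‖fderiv ℝ v₁ x‖ + ‖fderiv ℝ v₂ x‖ := by
    refine (norm_add_le _ _).trans ((add_comm _ _).trans_le (add_le_add ?_ ?_))
    · rw [norm_smul, Real.norm_of_nonneg h₂x.1]
      exact mul_le_of_le_one_left (norm_nonneg _) h₂x.2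
    · rw [norm_smul, norm_neg, Real.norm_of_nonneg h₁x.1]
      exact mul_le_of_le_one_left (norm_nonneg _) h₁x.2
  rw [hfderiv, add_comm]
  refine (norm_add_le _ _).trans (add_le_add ?_ hcorner)
  rw [norm_smul, Real.norm_of_nonneg hrampx]
  exact mul_le_mul_of_nonneg_left hannulus hrampx

variable [MeasurableSpace E] [BorelSpace E] {μ : Measure E}

lemma integral_sub_sub_le_integral_cornerTruncation [IsFiniteMeasureOnCompacts μ] (he : ‖e‖ = 1)
    (a : ℝ) (h₁ : LipschitzWith C₁ v₁) (h₂ : LipschitzWith C₂ v₂)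
    (hc₁ : HasCompactSupport v₁) (hc₂ : HasCompactSupport v₂)
    (hv₁ : ∀ x, v₁ x ∈ Icc 0 1) (hv₂ : ∀ x, v₂ x ∈ Icc 0 1) :
    ∫ x, v₁ x ∂μ - ∫ x, v₂ x ∂μ - ∫ x, halfSpaceRamp e a x * v₁ x ∂μ ≤
      ∫ x, |cornerTruncation e a v₁ v₂ x| ∂μ := by
  obtain ⟨C, hw⟩ := exists_lipschitzWith_cornerTruncation he a h₁ h₂ hv₁ hv₂
  have hi₁ := h₁.continuous.integrable_of_hasCompactSupport (μ := μ) hc₁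
  have hi₂ := h₂.continuous.integrable_of_hasCompactSupport (μ := μ) hc₂
  have hi₁₂ : Integrable (fun x => v₁ x - v₂ x) μ := hi₁.sub hi₂
  have hiφ : Integrable (fun x => halfSpaceRamp e a x * v₁ x) μ :=
    ((lipschitzWith_halfSpaceRamp he a).continuous.mul
      h₁.continuous).integrable_of_hasCompactSupport hc₁.mul_left
  have hiw := hw.continuous.integrable_of_hasCompactSupport (μ := μ)
    (hasCompactSupport_cornerTruncation hc₁)
  rw [← integral_sub hi₁ hi₂, ← integral_sub hi₁₂ hiφ]
  exact integral_mono (hi₁₂.sub hiφ) hiw.abs fun x =>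
    (sub_sub_le_cornerTruncation hv₁ hv₂ x).trans (le_abs_self _)

variable [FiniteDimensional ℝ E] [μ.IsAddHaarMeasure]

-- Integrating `∂ₑφ vᵢ` by parts shows that the cut adds no more than `∫ φ ‖∇v₁‖`, which it saves
-- on the outer sphere, while on the inner sphere it saves `∫ φ ‖∇v₂‖ ≥ ∫ ∂ₑφ v₂`.
lemma integral_norm_fderiv_cornerTruncation_le (he : ‖e‖ = 1) (a : ℝ) (h₁ : LipschitzWith C₁ v₁)
    (h₂ : LipschitzWith C₂ v₂) (hc₁ : HasCompactSupport v₁) (hc₂ : HasCompactSupport v₂)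
    (hv₁ : ∀ x, v₁ x ∈ Icc 0 1) (hv₂ : ∀ x, v₂ x ∈ Icc 0 1) :
    ∫ x, ‖fderiv ℝ (cornerTruncation e a v₁ v₂) x‖ ∂μ ≤
      ∫ x, ‖fderiv ℝ v₁ x‖ ∂μ + ∫ x, ‖fderiv ℝ v₂ x‖ ∂μ -
        ∫ x, lineDeriv ℝ (halfSpaceRamp e a) x e * v₂ x ∂μ := by
  let φ := halfSpaceRamp e a
  have hφ : LipschitzWith 1 φ := lipschitzWith_halfSpaceRamp he a
  have hφ₁ := halfSpaceRamp_mem_Icc e a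
  obtain ⟨C, hw⟩ := exists_lipschitzWith_cornerTruncation he a h₁ h₂ hv₁ hv₂
  have hD₁ := integrable_norm_fderiv (μ := μ) h₁ hc₁
  have hD₂ := integrable_norm_fderiv (μ := μ) h₂ hc₂
  have hφD₁ := integrable_mul_norm_fderiv (μ := μ) hφ.continuous hφ₁ h₁ hc₁
  have hφD₂ := integrable_mul_norm_fderiv (μ := μ) hφ.continuous hφ₁ h₂ hc₂
  have hslope := integrable_lineDeriv_mul (μ := μ) hφ h₁ hc₁ e
  have hparts₁ := integral_lineDeriv_mul_le (μ := μ) hφ hφ₁ h₁ hc₁ he.le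
  have hparts₂ := integral_lineDeriv_mul_le (μ := μ) hφ hφ₁ h₂ hc₂ he.le
  have hpointwise : ∀ᵐ x ∂μ, ‖fderiv ℝ (cornerTruncation e a v₁ v₂) x‖ ≤
      ‖fderiv ℝ v₁ x‖ - φ x * ‖fderiv ℝ v₁ x‖ + (‖fderiv ℝ v₂ x‖ - φ x * ‖fderiv ℝ v₂ x‖) +
        lineDeriv ℝ φ x e * v₁ x := by
    filter_upwards [h₁.ae_differentiableAt, h₂.ae_differentiableAt, hφ.ae_differentiableAt]
      with x hx₁ hx₂ hxφ
    refine (norm_fderiv_cornerTruncation_le he hv₁ hv₂ hx₁ hx₂ hxφ).trans_eq ?_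
    ring
  have hle := integral_mono_ae
    (integrable_norm_fderiv hw (hasCompactSupport_cornerTruncation hc₁))
    (((hD₁.sub hφD₁).add (hD₂.sub hφD₂)).add hslope) hpointwise
  rw [integral_add' ((hD₁.sub hφD₁).add (hD₂.sub hφD₂)) hslope,
    integral_add' (hD₁.sub hφD₁) (hD₂.sub hφD₂), integral_sub' hD₁ hφD₁,
    integral_sub' hD₂ hφD₂] at hle
  linarith

end CornerTruncation

section TangentCaps

variable {E : Type*} [NormedAddCommGroup E] [InnerProductSpace ℝ E] {e : E} {R r τ : ℝ}

/-- The cap of height `τ` cut off from the ball of radius `r` that touches the hyperplane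
`{x | ⟪e, x⟫ = R}` from below at the point `R • e`. -/
def tangentCap (e : E) (R τ r : ℝ) : Set E :=
  ball ((R - r) • e) r ∩ {x | R - τ < ⟪e, x⟫}

lemma isOpen_tangentCap (e : E) (R τ r : ℝ) : IsOpen (tangentCap e R τ r) :=
  isOpen_ball.inter (isOpen_lt continuous_const (by fun_prop))

lemma inner_lt_of_mem_tangentCap (he : ‖e‖ = 1) {x : E} (hx : x ∈ tangentCap e R τ r) :
    ⟪e, x⟫ < R := by
  have hinner := real_inner_le_norm e (x - (R - r) • e)
  rw [inner_sub_right, real_inner_smul_right, real_inner_self_eq_norm_sq, he, ← dist_eq_norm]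
    at hinner
  linarith [mem_ball.1 hx.1]

variable [FiniteDimensional ℝ E] [MeasurableSpace E] {μ : Measure E}

lemma measure_tangentCap_lt_top [IsFiniteMeasureOnCompacts μ] : μ (tangentCap e R τ r) < ∞ :=
  have := FiniteDimensional.proper_real E
  (measure_mono inter_subset_left).trans_lt measure_ball_lt_top

lemma measureReal_tangentCap_pos [IsFiniteMeasureOnCompacts μ] [μ.IsOpenPosMeasure]
    (he : ‖e‖ = 1) (hr : 0 < r) (hτ : 0 < τ) : 0 < μ.real (tangentCap e R τ r) := by
  obtain ⟨δ, hδ, hlt⟩ := exists_between (lt_min hr hτ)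
  have ⟨hδr, hδτ⟩ := lt_min_iff.1 hlt
  refine ENNReal.toReal_pos ((isOpen_tangentCap e R τ r).measure_pos μ ?_).ne'
    measure_tangentCap_lt_top.ne
  refine ⟨(R - δ) • e, ?_, ?_⟩
  · rw [mem_ball, dist_eq_norm, ← sub_smul, norm_smul, he, mul_one, sub_sub_sub_cancel_left,
      Real.norm_of_nonneg (by linarith)]
    linarith
  · rw [mem_ofPred_eq, real_inner_smul_right, real_inner_self_eq_norm_sq, he]
    linarith

variable [BorelSpace E] [μ.IsAddHaarMeasure]

lemma div_pow_mul_measureReal_tangentCap_le (he : ‖e‖ = 1) (hr : 0 < r) {r' : ℝ}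
    (hr' : r ≤ r') :
    (r / r') ^ Module.finrank ℝ E * μ.real (tangentCap e R τ r') ≤ μ.real (tangentCap e R τ r) := by
  have hr'₀ : 0 < r' := hr.trans_le hr'
  set k := r / r'
  have hk : 0 < k := div_pos hr hr'₀
  have hkr : k * r' = r := div_mul_cancel₀ r hr'₀.ne'
  have hsub : AffineMap.homothety (R • e) k '' tangentCap e R τ r' ⊆ tangentCap e R τ r := by
    rintro _ ⟨x, hx, rfl⟩
    rw [AffineMap.homothety_apply, vsub_eq_sub, vadd_eq_add]
    refine ⟨?_, ?_⟩
    · have hcenter : k • (x - R • e) + R • e - (R - r) • e = k • (x - (R - r') • e) := by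
        rw [← hkr]
        module
      rw [mem_ball, dist_eq_norm, hcenter, norm_smul, Real.norm_of_nonneg hk.le, ← dist_eq_norm]
      exact (mul_lt_mul_of_pos_left (mem_ball.1 hx.1) hk).trans_eq hkr
    · have hheight : k * (R - ⟪e, x⟫) < τ :=
        (mul_le_of_le_one_left (sub_nonneg.2 (inner_lt_of_mem_tangentCap he hx).le)
          (div_le_one_of_le₀ hr' hr'₀.le)).trans_lt (sub_lt_comm.1 hx.2)
      rw [mem_ofPred_eq, inner_add_right, real_inner_smul_right, inner_sub_right,
        real_inner_smul_right, real_inner_self_eq_norm_sq, he]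
      linarith
  have hmeasure := measureReal_mono (μ := μ) hsub measure_tangentCap_lt_top.ne
  rwa [measureReal_def, Measure.addHaar_image_homothety, ENNReal.toReal_mul,
    ENNReal.toReal_ofReal (abs_nonneg _), abs_of_nonneg (by positivity)] at hmeasure

end TangentCaps

section StrictUpperBound

variable {E : Type*} [NormedAddCommGroup E] [InnerProductSpace ℝ E] {e : E}
  {R r r₁ R₁ r₂ R₂ τ : ℝ} {v₁ v₂ : E → ℝ}

lemma tsupport_cornerTruncation_subset {c₁ c₂ : E} (a : ℝ) (hv₁ : IsBallCutoff c₁ r₁ R₁ v₁)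
    (hv₂ : IsBallCutoff c₂ r₂ R₂ v₂) :
    tsupport (cornerTruncation e a v₁ v₂) ⊆ closedBall c₁ R₁ \ ball c₂ r₂ := by
  refine closure_minimal (fun x hx => ⟨?_, fun hx₂ => hx ?_⟩)
    (isClosed_closedBall.sdiff isOpen_ball)
  · exact mem_closedBall.2 (le_of_not_ge fun h => hx (by simp [cornerTruncation, hv₁.eq_zero h]))
  · simp [cornerTruncation, hv₂.eq_one (mem_ball.1 hx₂).le]

variable [FiniteDimensional ℝ E] [MeasurableSpace E] {μ : Measure E}

lemma integral_halfSpaceRamp_mul_le [IsFiniteMeasureOnCompacts μ] (he : ‖e‖ = 1)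
    (hv : IsBallCutoff 0 r₁ R₁ v₁) (hR : R₁ ≤ R) :
    ∫ x, halfSpaceRamp e (R - τ) x * v₁ x ∂μ ≤ τ * μ.real (tangentCap e R τ R) := by
  have hzero (x) (hx : x ∉ tangentCap e R τ R) : halfSpaceRamp e (R - τ) x * v₁ x = 0 := by
    rcases le_or_gt R (dist x 0) with hxR | hxR
    · rw [hv.eq_zero (hR.trans hxR), mul_zero]
    · have hle : ⟪e, x⟫ ≤ R - τ := not_lt.1 fun h => hx ⟨by simpa using hxR, h⟩
      rw [halfSpaceRamp_of_le hle, zero_mul]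
  rw [← setIntegral_eq_integral_of_forall_compl_eq_zero hzero]
  refine (Real.le_norm_self _).trans
    (norm_setIntegral_le_of_norm_le_const measure_tangentCap_lt_top fun x hx => ?_)
  have hramp := halfSpaceRamp_mem_Icc e (R - τ) x
  rw [Real.norm_of_nonneg (mul_nonneg hramp.1 (hv.mem_Icc x).1)]
  refine (mul_le_of_le_one_right hramp.1 (hv.mem_Icc x).2).trans ?_
  linarith [halfSpaceRamp_le_inner_sub (le_of_lt hx.2), inner_lt_of_mem_tangentCap he hx]

variable [BorelSpace E] [μ.IsAddHaarMeasure]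

lemma measureReal_tangentCap_le_integral_lineDeriv_mul (he : ‖e‖ = 1) (hτ : τ ≤ 1)
    (hv : IsBallCutoff ((R - r) • e) r₂ R₂ v₂) (hr : r ≤ r₂) :
    μ.real (tangentCap e R τ r) ≤ ∫ x, lineDeriv ℝ (halfSpaceRamp e (R - τ)) x e * v₂ x ∂μ := by
  let f : E → ℝ := fun x => lineDeriv ℝ (halfSpaceRamp e (R - τ)) x e * v₂ x
  have hint : Integrable f μ := integrable_lineDeriv_mul (lipschitzWith_halfSpaceRamp he _)
    hv.lipschitzWith hv.hasCompactSupport e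
  have hsub : tangentCap e R τ r ⊆ {x | 1 ≤ f x} := fun x hx => by
    have hlt := inner_lt_of_mem_tangentCap he hx
    have hslope := lineDeriv_halfSpaceRamp_eq_one he (a := R - τ) ⟨hx.2, by linarith⟩
    simp only [f, mem_ofPred_eq, hslope, hv.eq_one ((mem_ball.1 hx.1).le.trans hr), mul_one,
      le_refl]
  have hmarkov := mul_meas_ge_le_integral_of_nonneg (.of_forall fun x =>
    mul_nonneg (lineDeriv_halfSpaceRamp_nonneg e (R - τ) x) (hv.mem_Icc x).1) hint 1
  rw [one_mul] at hmarkov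
  exact (measureReal_mono hsub (hint.measure_ge_lt_top one_pos).ne).trans hmarkov

lemma integral_norm_fderiv_cornerTruncation_add_le (he : ‖e‖ = 1) (hτ : τ ≤ 1)
    (hv₁ : IsBallCutoff 0 r₁ R₁ v₁) (hr₁ : 0 ≤ r₁) (hrR₁ : r₁ < R₁)
    (hv₂ : IsBallCutoff ((R - r) • e) r₂ R₂ v₂) (hr₂ : 0 ≤ r₂) (hrR₂ : r₂ < R₂) (hr : r ≤ r₂) :
    ∫ x, ‖fderiv ℝ (cornerTruncation e (R - τ) v₁ v₂) x‖ ∂μ + μ.real (tangentCap e R τ r) ≤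
      Module.finrank ℝ E * (R₁ ^ (Module.finrank ℝ E - 1) + R₂ ^ (Module.finrank ℝ E - 1)) *
        μ.real (ball 0 1) := by
  have henergy := integral_norm_fderiv_cornerTruncation_le (μ := μ) he (R - τ) hv₁.lipschitzWith
    hv₂.lipschitzWith hv₁.hasCompactSupport hv₂.hasCompactSupport hv₁.mem_Icc hv₂.mem_Icc
  have hcap := measureReal_tangentCap_le_integral_lineDeriv_mul (μ := μ) he hτ hv₂ hr
  linarith [hv₁.integral_norm_fderiv_le (μ := μ) hr₁ hrR₁,
    hv₂.integral_norm_fderiv_le (μ := μ) hr₂ hrR₂]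

lemma sub_le_integral_abs_cornerTruncation (he : ‖e‖ = 1) (hv₁ : IsBallCutoff 0 r₁ R₁ v₁)
    (hr₁ : 0 ≤ r₁) (hR : R₁ ≤ R) {c₂ : E}
    (hv₂ : IsBallCutoff c₂ r₂ R₂ v₂) (hR₂ : 0 ≤ R₂) :
    (r₁ ^ Module.finrank ℝ E - R₂ ^ Module.finrank ℝ E) * μ.real (ball 0 1) -
      τ * μ.real (tangentCap e R τ R) ≤ ∫ x, |cornerTruncation e (R - τ) v₁ v₂ x| ∂μ := by
  have hmass := integral_sub_sub_le_integral_cornerTruncation (μ := μ) he (R - τ) hv₁.lipschitzWith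
    hv₂.lipschitzWith hv₁.hasCompactSupport hv₂.hasCompactSupport hv₁.mem_Icc hv₂.mem_Icc
  linarith [integral_halfSpaceRamp_mul_le (μ := μ) (τ := τ) he hv₁ hR,
    hv₁.pow_mul_le_integral (μ := μ) hr₁, hv₂.integral_le_pow_mul (μ := μ) hR₂]

end StrictUpperBound

section StrictUpperBoundOm

variable {N : ℕ} [NeZero N] {R₀ R₁ τ : ℝ} {Λ : ℝ → ℝ}

lemma exists_closedBall_diff_ball_subset_Om (hR₀ : 0 < R₀) (hR : R₀ < R₁) {ε : ℝ} (hε : 0 < ε) :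
    ∃ s ∈ Ico 0 (R₁ - R₀),
      closedBall 0 (R₁ - ε) \ ball ((R₁ - R₀) • e1 N) (R₀ + ε) ⊆ Om N R₀ R₁ s := by
  obtain ⟨s, hs, hsR⟩ : ∃ s, max 0 (R₁ - R₀ - ε) < s ∧ s < R₁ - R₀ :=
    exists_between (max_lt (by linarith) (by linarith))
  obtain ⟨hs₀, hsε⟩ := max_lt_iff.1 hs
  refine ⟨s, ⟨hs₀.le, hsR⟩, fun x ⟨hx₁, hx₂⟩ => (mem_Om hR₀.ne').2 ⟨?_, ?_⟩⟩
  · linarith [mem_closedBall_zero_iff.1 hx₁]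
  · have hcenters : dist (s • e1 N) ((R₁ - R₀) • e1 N) = R₁ - R₀ - s := by
      rw [dist_comm, dist_eq_norm, ← sub_smul, norm_smul, norm_e1, mul_one,
        Real.norm_of_nonneg (by linarith)]
    linarith [dist_triangle x (s • e1 N) ((R₁ - R₀) • e1 N),
      le_of_not_gt fun h => hx₂ (mem_ball.2 h)]

lemma mul_sub_le_of_forall_le_of_pos (hR₀ : 0 < R₀) (hR : R₀ < R₁)
    (hΛ : ∀ s ∈ Ico 0 (R₁ - R₀), Tendsto (fun p => lam1 p (Om N R₀ R₁ s)) (𝓝[>] 1) (𝓝 (Λ s)))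
    {h : ℝ} (hh : 0 ≤ h) (hhΛ : ∀ s ∈ Ico 0 (R₁ - R₀), h ≤ Λ s) (hτ : τ ≤ 1) {ε : ℝ}
    (hε : 0 < ε) (hεR : 2 * ε < R₁) :
    h * (((R₁ - 2 * ε) ^ N - (R₀ + 2 * ε) ^ N) * volume.real (ball (0 : EuclideanSpace ℝ (Fin N)) 1)
        - τ * volume.real (tangentCap (e1 N) R₁ τ R₁)) +
      volume.real (tangentCap (e1 N) R₁ τ R₀) ≤
      N * ((R₁ - ε) ^ (N - 1) + (R₀ + 2 * ε) ^ (N - 1)) *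
        volume.real (ball (0 : EuclideanSpace ℝ (Fin N)) 1) := by
  obtain ⟨s, hs, hsub⟩ := exists_closedBall_diff_ball_subset_Om (N := N) hR₀ hR hε
  obtain ⟨v₁, hv₁⟩ := exists_isBallCutoff (0 : EuclideanSpace ℝ (Fin N))
    (show 0 ≤ R₁ - 2 * ε by linarith) (show R₁ - 2 * ε < R₁ - ε by linarith)
  obtain ⟨v₂, hv₂⟩ := exists_isBallCutoff ((R₁ - R₀) • e1 N)
    (show 0 ≤ R₀ + ε by linarith) (show R₀ + ε < R₀ + 2 * ε by linarith)
  obtain ⟨C, hw⟩ := exists_lipschitzWith_cornerTruncation norm_e1 (R₁ - τ) hv₁.lipschitzWith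
    hv₂.lipschitzWith hv₁.mem_Icc hv₂.mem_Icc
  have hmass := sub_le_integral_abs_cornerTruncation (μ := volume) (R := R₁) (τ := τ) norm_e1 hv₁
    (by linarith) (by linarith) hv₂ (by linarith)
  have henergy := integral_norm_fderiv_cornerTruncation_add_le (μ := volume) norm_e1 hτ hv₁
    (by linarith) (by linarith) hv₂ (by linarith) (by linarith) (by linarith)
  rw [finrank_euclideanSpace_fin] at hmass henergy
  have hrayleigh := mul_integral_abs_le_of_tendsto_lam1 (isOpen_Om N R₀ R₁ s) (hΛ s hs) hw
    (hasCompactSupport_cornerTruncation hv₁.hasCompactSupport)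
    ((tsupport_cornerTruncation_subset _ hv₁ hv₂).trans hsub)
  refine le_trans ?_ henergy
  gcongr
  calc _ ≤ h * ∫ x, |cornerTruncation (e1 N) (R₁ - τ) v₁ v₂ x| := by gcongr
    _ ≤ Λ s * ∫ x, |cornerTruncation (e1 N) (R₁ - τ) v₁ v₂ x| := by
      gcongr
      exact hhΛ s hs
    _ ≤ _ := hrayleigh

lemma mul_sub_le_of_forall_le (hR₀ : 0 < R₀) (hR : R₀ < R₁)
    (hΛ : ∀ s ∈ Ico 0 (R₁ - R₀), Tendsto (fun p => lam1 p (Om N R₀ R₁ s)) (𝓝[>] 1) (𝓝 (Λ s)))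
    {h : ℝ} (hh : 0 ≤ h) (hhΛ : ∀ s ∈ Ico 0 (R₁ - R₀), h ≤ Λ s) (hτ : τ ≤ 1) :
    h * ((R₁ ^ N - R₀ ^ N) * volume.real (ball (0 : EuclideanSpace ℝ (Fin N)) 1)
        - τ * volume.real (tangentCap (e1 N) R₁ τ R₁)) +
      volume.real (tangentCap (e1 N) R₁ τ R₀) ≤
      N * (R₁ ^ (N - 1) + R₀ ^ (N - 1)) *
        volume.real (ball (0 : EuclideanSpace ℝ (Fin N)) 1) := by
  set ω := volume.real (ball (0 : EuclideanSpace ℝ (Fin N)) 1)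
  set β := volume.real (tangentCap (e1 N) R₁ τ R₁)
  set γ := volume.real (tangentCap (e1 N) R₁ τ R₀)
  let f : ℝ → ℝ := fun ε => h * (((R₁ - 2 * ε) ^ N - (R₀ + 2 * ε) ^ N) * ω - τ * β) + γ
  let g : ℝ → ℝ := fun ε => N * ((R₁ - ε) ^ (N - 1) + (R₀ + 2 * ε) ^ (N - 1)) * ω
  have hf : Tendsto f (𝓝[>] 0) (𝓝 (f 0)) :=
    (show Continuous f by fun_prop).continuousAt.continuousWithinAt
  have hg : Tendsto g (𝓝[>] 0) (𝓝 (g 0)) :=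
    (show Continuous g by fun_prop).continuousAt.continuousWithinAt
  have hle : f 0 ≤ g 0 := by
    refine le_of_tendsto_of_tendsto hf hg ?_
    filter_upwards [Ioo_mem_nhdsGT (show 0 < R₁ / 2 by linarith)] with ε hε
    exact mul_sub_le_of_forall_le_of_pos hR₀ hR hΛ hh hhΛ hτ hε.1 (by linarith [hε.2])
  simpa only [f, g, mul_zero, sub_zero, add_zero] using hle

-- As `s → R₁ - R₀` a cusp opens between the spheres. Cutting it off at height `τ` keeps the
-- perimeter below that of the annulus by `μ(tangentCap R₀) ≥ (R₀ / R₁)ᴺ μ(tangentCap R₁)`, at the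
-- cost of a volume at most `τ μ(tangentCap R₁)`.
lemma exists_lt_annulusRatio (hR₀ : 0 < R₀) (hR : R₀ < R₁)
    (hΛ : ∀ s ∈ Ico 0 (R₁ - R₀), Tendsto (fun p => lam1 p (Om N R₀ R₁ s)) (𝓝[>] 1) (𝓝 (Λ s))) :
    ∃ s ∈ Ico 0 (R₁ - R₀), Λ s < annulusRatio N R₀ R₁ := by
  by_contra! hle
  have hR₁ : 0 < R₁ := hR₀.trans hR
  have hh : 0 < annulusRatio N R₀ R₁ := annulusRatio_pos hR₀ hR
  obtain ⟨τ, hτ, hτlt⟩ : ∃ τ > 0, τ < min 1 ((R₀ / R₁) ^ N / annulusRatio N R₀ R₁) :=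
    exists_between (by positivity)
  obtain ⟨hτ₁, hτk⟩ := lt_min_iff.1 hτlt
  have hbound := mul_sub_le_of_forall_le hR₀ hR hΛ hh.le hle hτ₁.le
  have hscale := div_pow_mul_measureReal_tangentCap_le (μ := volume) (e := e1 N) (R := R₁)
    (τ := τ) norm_e1 hR₀ hR.le
  have hβ := measureReal_tangentCap_pos (μ := volume) (e := e1 N) (R := R₁) norm_e1 hR₁ hτ
  have hsave := mul_lt_mul_of_pos_right ((lt_div_iff₀ hh).1 hτk) hβ
  rw [finrank_euclideanSpace_fin] at hscale
  rw [← annulusRatio_mul_sub hR₀ hR] at hbound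
  linarith

end StrictUpperBoundOm

lemma exists_eq_left_and_forall_lt_of_antitoneOn {α β : Type*} [ConditionallyCompleteLinearOrder α]
    [TopologicalSpace α] [OrderTopology α] [PartialOrder β] [TopologicalSpace β] [T1Space β]
    {f : α → β} {a b s₁ : α} (hcont : ContinuousOn f (Ico a b)) (hanti : AntitoneOn f (Ico a b))
    (hs₁ : s₁ ∈ Ico a b) (hlt : f s₁ < f a) :
    ∃ s₀ ∈ Ico a b, f a = f s₀ ∧ ∀ s ∈ Ioo s₀ b, f s < f s₀ := by
  let A := {s ∈ Ico a b | f s = f a}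
  have haA : a ∈ A := ⟨⟨le_rfl, hs₁.1.trans_lt hs₁.2⟩, rfl⟩
  have hub : s₁ ∈ upperBounds A := fun s hs =>
    le_of_not_gt fun h => (hlt.trans_eq hs.2.symm).not_ge (hanti hs₁ hs.1 h.le)
  have hmem : sSup A ∈ Ico a b := ⟨le_csSup ⟨s₁, hub⟩ haA, (csSup_le ⟨a, haA⟩ hub).trans_lt hs₁.2⟩
  have heq : f (sSup A) = f a := by
    have himage : f '' A ⊆ {f a} := by
      rintro _ ⟨s, hs, rfl⟩
      exact hs.2
    exact closure_minimal himage isClosed_singleton <|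
      ((hcont _ hmem).mono fun s hs => hs.1).mem_closure_image
        (csSup_mem_closure ⟨a, haA⟩ ⟨s₁, hub⟩)
  refine ⟨sSup A, hmem, heq.symm, fun s hs => ?_⟩
  have hs' : s ∈ Ico a b := ⟨hmem.1.trans hs.1.le, hs.2⟩
  exact (hanti hmem hs' hs.1.le).lt_of_ne fun h =>
    hs.1.not_ge (le_csSup ⟨s₁, hub⟩ ⟨hs', h.trans heq⟩)

section Main

variable {N : ℕ} [NeZero N] {R₀ R₁ : ℝ} {Λ : ℝ → ℝ}

lemma annulusRatio_le_of_tendsto_lam1 (hR₀ : 0 < R₀) (hR : R₀ < R₁) {l : ℝ}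
    (hl : Tendsto (fun p => lam1 p (Om N R₀ R₁ 0)) (𝓝[>] 1) (𝓝 l)) : annulusRatio N R₀ R₁ ≤ l := by
  have hlim : Tendsto (fun p : ℝ => annulusRatio N R₀ R₁ - (p - 1)) (𝓝[>] 1)
      (𝓝 (annulusRatio N R₀ R₁)) := by
    refine Tendsto.mono_left (Continuous.tendsto' ?_ _ _ ?_) nhdsWithin_le_nhds
    · fun_prop
    · rw [sub_self, sub_zero]
  refine le_of_tendsto_of_tendsto hlim hl ?_
  filter_upwards [self_mem_nhdsWithin] with p hp
  exact annulusRatio_sub_le_lam1_Om_zero hR₀ hR hp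

lemma antitoneOn_of_tendsto_lam1_Om (hR₀ : 0 < R₀) (hR : R₀ < R₁)
    (hΛ : ∀ s ∈ Ico 0 (R₁ - R₀), Tendsto (fun p => lam1 p (Om N R₀ R₁ s)) (𝓝[>] 1) (𝓝 (Λ s))) :
    AntitoneOn Λ (Ico 0 (R₁ - R₀)) := by
  intro s hs t ht hst
  refine le_of_tendsto_of_tendsto (hΛ t ht) (hΛ s hs) ?_
  filter_upwards [self_mem_nhdsWithin] with p hp
  exact lam1_Om_le_of_le hR₀ hR (le_of_lt hp) hs.1 hst

theorem stmt6_general (hR₀ : 0 < R₀) (hR : R₀ < R₁)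
    (hΛ : ∀ s ∈ Ico 0 (R₁ - R₀), Tendsto (fun p => lam1 p (Om N R₀ R₁ s)) (𝓝[>] 1) (𝓝 (Λ s))) :
    ContinuousOn Λ (Ico 0 (R₁ - R₀)) ∧ AntitoneOn Λ (Ico 0 (R₁ - R₀)) ∧
    ∃ sstar ∈ Ico 0 (R₁ - R₀), Λ 0 = Λ sstar ∧
      ∀ s ∈ Ioo sstar (R₁ - R₀), Λ s < Λ sstar := by
  have hcont : ContinuousOn Λ (Ico 0 (R₁ - R₀)) :=
    continuousOn_of_tendsto_lam1_Om hR₀ hR (fun s hs => (abs_of_nonneg hs.1).trans_lt hs.2) hΛ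
  have hanti := antitoneOn_of_tendsto_lam1_Om hR₀ hR hΛ
  have hconcentric : annulusRatio N R₀ R₁ ≤ Λ 0 :=
    annulusRatio_le_of_tendsto_lam1 hR₀ hR (hΛ 0 ⟨le_rfl, sub_pos.2 hR⟩)
  obtain ⟨s₁, hs₁, hlt⟩ := exists_lt_annulusRatio hR₀ hR hΛ
  exact ⟨hcont, hanti, exists_eq_left_and_forall_lt_of_antitoneOn hcont hanti hs₁
    (hlt.trans_le hconcentric)⟩

end Main

theorem stmt6 (N : ℕ) (hN : 2 ≤ N) (R₀ R₁ : ℝ) (hR₀ : 0 < R₀) (hR : R₀ < R₁)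
    (Λ : ℝ → ℝ)
    (hΛ : ∀ s ∈ Set.Ico 0 (R₁ - R₀),
      Tendsto (fun p : ℝ => lam1 p (Om N R₀ R₁ s)) (nhdsWithin 1 (Set.Ioi 1)) (nhds (Λ s))) :
    ContinuousOn Λ (Set.Ico 0 (R₁ - R₀)) ∧ AntitoneOn Λ (Set.Ico 0 (R₁ - R₀)) ∧
    ∃ sstar ∈ Set.Ico 0 (R₁ - R₀), Λ 0 = Λ sstar ∧
      ∀ s ∈ Set.Ioo sstar (R₁ - R₀), Λ s < Λ sstar := by
  have : NeZero N := ⟨by omega⟩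
  exact stmt6_general hR₀ hR hΛ
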